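/- arXiv:1202.0423 — 3 statements merged into one kernel-verified Lean document; each statement's English description precedes it below -/
import Mathlib

section
/- Let κ := −2π/log q and let μ ∈ ℂ be such that μ ≠ −m + kκi for every m ∈ ℕ (m ≥ 0) and every k ∈ ℤ. Set μ_k := μ + kκi. Then for every x ∈ ℂ with Re(x) > 0, the family (Γ(μ_k)·x^{−μ_k}·G(μ_k; q, 1/x))_{k∈ℤ} is summable and F(μ;q,x) = [κ·(q^μ;q)_∞ / (2π·(q;q)_∞)] · Σ_{k∈ℤ} Γ(μ_k)·x^{−μ_k}·G(μ_k; q, 1/x). -/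
/-! The proof establishes the formula for `Re μ > 0` by Poisson summation and continues it in `μ`
through functional equations.

Expanding `G` turns the right-hand side into a double series `RR` over `n ∈ ℕ`, `k ∈ ℤ` with terms
`gc q n * Γ (μ + kκi + n) * x ^ (-(μ + kκi + n))`. It converges absolutely, locally uniformly in the
half-plane `Re x > 0`: rotating the ray in Euler's integral gives `|Γ s| ≤ C e^{-θ |Im s|}` for any
`θ < π / 2` (`norm_Gamma_le`), which beats the growth `e^{|arg x| |Im s|}` of `x ^ (-s)`, while the
Gaussian decay of `gc q n` beats the factorial growth in `n` (`exists_Gamma_bound`,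
`exists_tt_bound`).

For `Re μ > 0`, Poisson summation applied to `u ↦ q^{us} exp (-x q^u)` with `s = μ + n`, whose
Fourier transform is an Euler integral, turns the sum over `k` into `∑_{j ∈ ℤ} q^{js} exp (-x q^j)`
(`tsum_pt`). Summing then over `n` by Euler's identity produces the factor `(q^{j+1};q)_∞`, which
vanishes for `j < 0` and is `(q;q)_∞ / (q;q)_j` for `j ≥ 0` (`RR_eq`). The same series of
exponentials is obtained from `F` by expanding `(q^μ;q)_n` with the `q`-binomial theorem (`F_eq`).

To pass from `μ + 1` to `μ` (`F_eq_RR`), write `cc` for the constant in front of the series. Both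
`Φ = F` and `Φ = cc * RR` satisfy `∂ₓ Φ(μ, x) = -(1 - q^μ) Φ(μ + 1, x)` and
`Φ(μ, x) - q^μ Φ(μ, q x) = (1 - q^μ) Φ(μ + 1, x)`, for `cc * RR` because
`cc μ = (1 - q^μ) cc (μ + 1)`. By the first equation the difference of the two sides is constant in
`x`, by the second this constant `D` satisfies `D = q^μ D`, and `q^μ ≠ 1` because `μ ∉ κ ℤ i`. -/

/-- `(a;c)_n = ∏_{j=0}^{n-1} (1 - a c^j)`. -/
noncomputable def qPoch (a c : ℂ) (n : ℕ) : ℂ := ∏ j ∈ Finset.range n, (1 - a * c ^ j)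

/-- `(a;c)_∞ = ∏_{j=0}^{∞} (1 - a c^j)`. -/
noncomputable def qPochInf (a c : ℂ) : ℂ := ∏' j : ℕ, (1 - a * c ^ j)

/-- `q^μ := exp (μ log q)` for real `q > 0` and complex `μ`. -/
noncomputable def qpow (q : ℝ) (μ : ℂ) : ℂ := Complex.exp (μ * Real.log q)

/-- `F(μ;q,x) = Σ_{n≥0} ((q^μ;q)_n / n!) (-x)^n`. -/
noncomputable def F (μ : ℂ) (q : ℝ) (x : ℂ) : ℂ :=
  ∑' n : ℕ, qPoch (qpow q μ) (q : ℂ) n / (Nat.factorial n : ℂ) * (-x) ^ n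

/-- `(a)_n = a (a+1) ⋯ (a+n-1)`. -/
noncomputable def poch (a : ℂ) (n : ℕ) : ℂ := ∏ j ∈ Finset.range n, (a + (j : ℂ))

/-- `G(a;q,x) = Σ_{n≥0} ((a)_n q^{n(n+1)/2} / (q;q)_n) (-x)^n`. -/
noncomputable def G (a : ℂ) (q : ℝ) (x : ℂ) : ℂ :=
  ∑' n : ℕ, poch a n * (q : ℂ) ^ (n * (n + 1) / 2) / qPoch (q : ℂ) (q : ℂ) n * (-x) ^ n

/-! ### Euler's integral in the half-plane -/

open Complex Set Filter Topology MeasureTheory in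
/-- Euler's integral for complex `r` with `Re r > 0`, by the identity theorem from real `r`. -/
lemma laplace_cpow {s : ℂ} (hs : 0 < s.re) {r : ℂ} (hr : 0 < r.re) :
    ∫ t in Ioi (0 : ℝ), (t : ℂ) ^ (s - 1) * cexp (-(r * t)) = r ^ (-s) * Complex.Gamma s := by
  have meas : ∀ z : ℂ, AEStronglyMeasurable (fun t : ℝ => (t : ℂ) ^ (s - 1) * cexp (-(z * t)))
      (volume.restrict (Ioi 0)) := by
    intro z
    refine ContinuousOn.aestronglyMeasurable ?_ measurableSet_Ioi
    intro t ht
    refine ContinuousAt.continuousWithinAt (ContinuousAt.mul ?_ (by fun_prop))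
    exact (continuousAt_ofReal_cpow_const t (s - 1) (Or.inr (ne_of_gt ht)))
  have norm_eq : ∀ z : ℂ, ∀ t ∈ Ioi (0 : ℝ), ‖(t : ℂ) ^ (s - 1) * cexp (-(z * t))‖
      = t ^ (s.re - 1) * Real.exp (-(z.re * t)) := by
    intro z t ht
    rw [norm_mul, norm_cpow_eq_rpow_re_of_pos ht, Complex.norm_exp]
    simp
  have int : ∀ z : ℂ, 0 < z.re → Integrable (fun t : ℝ => (t : ℂ) ^ (s - 1) * cexp (-(z * t)))
      (volume.restrict (Ioi 0)) := by
    intro z hz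
    have h := integrableOn_rpow_mul_exp_neg_mul_rpow (s := s.re - 1) (p := 1) (b := z.re)
      (by linarith) (by norm_num) hz
    refine Integrable.mono' h (meas z) ?_
    filter_upwards [ae_restrict_mem measurableSet_Ioi] with t ht
    rw [norm_eq z t ht]
    simp
  have hopen : IsOpen {z : ℂ | 0 < z.re} := isOpen_lt continuous_const Complex.continuous_re
  have hdiff : DifferentiableOn ℂ
      (fun z : ℂ => ∫ t in Ioi (0 : ℝ), (t : ℂ) ^ (s - 1) * cexp (-(z * t))) {z | 0 < z.re} := by
    intro z hz
    have hz' : 0 < z.re := hz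
    have hball : ∀ w ∈ Metric.ball z (z.re / 2), z.re / 2 < w.re := by
      intro w hw
      have h1 : |(w - z).re| < z.re / 2 :=
        (Complex.abs_re_le_norm _).trans_lt (by simpa [dist_eq_norm] using hw)
      rw [Complex.sub_re] at h1
      linarith [(abs_lt.mp h1).1]
    have h := hasDerivAt_integral_of_dominated_loc_of_deriv_le
      (μ := volume.restrict (Ioi (0 : ℝ)))
      (F := fun (z : ℂ) (t : ℝ) => (t : ℂ) ^ (s - 1) * cexp (-(z * t)))
      (F' := fun (z : ℂ) (t : ℝ) => (-t : ℂ) * ((t : ℂ) ^ (s - 1) * cexp (-(z * t))))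
      (bound := fun t => t ^ s.re * Real.exp (-(z.re / 2) * t ^ (1 : ℝ)))
      (Metric.ball_mem_nhds z (half_pos hz'))
      (Eventually.of_forall meas) (int z hz')
      ((by fun_prop : Continuous fun t : ℝ => (-t : ℂ)).aestronglyMeasurable.mul (meas z))
      ?_ (integrableOn_rpow_mul_exp_neg_mul_rpow (by linarith) (by norm_num) (half_pos hz')) ?_
    · exact h.2.differentiableAt.differentiableWithinAt
    · filter_upwards [ae_restrict_mem measurableSet_Ioi] with t ht w hw
      have ht' : 0 < t := ht
      rw [norm_mul, norm_eq w t ht]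
      have : ‖(-t : ℂ)‖ = t := by simp [abs_of_pos ht']
      rw [this, ← mul_assoc, Real.rpow_sub_one ht'.ne', mul_div_cancel₀ _ ht'.ne']
      gcongr
      rw [Real.rpow_one]
      nlinarith [hball w hw]
    · refine Eventually.of_forall fun t w _ => ?_
      have h1 : HasDerivAt (fun z : ℂ => -(z * (t : ℂ))) (-t : ℂ) w := by
        simpa using ((hasDerivAt_id w).mul_const (t : ℂ)).fun_neg
      have h2 := (h1.cexp).const_mul ((t : ℂ) ^ (s - 1))
      exact h2.congr_deriv (by ring)
  have hdiff2 : DifferentiableOn ℂ (fun z : ℂ => z ^ (-s) * Complex.Gamma s) {z | 0 < z.re} := by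
    intro z hz
    refine DifferentiableAt.differentiableWithinAt (DifferentiableAt.mul_const ?_ _)
    exact differentiableAt_id.cpow_const (Or.inl hz)
  have hconv : Convex ℝ {z : ℂ | 0 < z.re} := convex_halfSpace_re_gt 0
  refine (hdiff.analyticOnNhd hopen).eqOn_of_preconnected_of_frequently_eq
    (hdiff2.analyticOnNhd hopen) hconv.isPreconnected (z₀ := 1) (by simp) ?_ hr
  -- the two sides agree on the positive reals, which accumulate at `1`
  have hreal : ∀ ρ : ℝ, 0 < ρ → (∫ t in Ioi (0 : ℝ), (t : ℂ) ^ (s - 1) * cexp (-(ρ * t)))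
      = (ρ : ℂ) ^ (-s) * Complex.Gamma s := by
    intro ρ hρ
    rw [integral_cpow_mul_exp_neg_mul_Ioi hs hρ, one_div, inv_cpow, cpow_neg]
    rw [arg_ofReal_of_nonneg hρ.le]; exact Real.pi_pos.ne
  have htend : Tendsto (fun n : ℕ => ((1 + 1 / ((n : ℝ) + 1) : ℝ) : ℂ)) atTop (𝓝[≠] 1) := by
    refine tendsto_nhdsWithin_iff.mpr ⟨?_, Eventually.of_forall fun n => ?_⟩
    · have := (tendsto_one_div_add_atTop_nhds_zero_nat (𝕜 := ℝ)).const_add 1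
      rw [add_zero] at this
      exact (Complex.continuous_ofReal.tendsto 1).comp this
    · intro h
      have h' : (1 + 1 / ((n : ℝ) + 1) : ℝ) = 1 := Complex.ofReal_injective h
      have : 0 < 1 / ((n : ℝ) + 1) := by positivity
      linarith
  exact htend.frequently (Frequently.of_forall fun n => hreal _ (by positivity))

/-- Rotating the ray of integration in Euler's integral by the angle `±θ` shows that `Γ` decays
like `exp (-θ |Im s|)` on vertical lines, for each `θ < π / 2`. -/
lemma norm_Gamma_le {s : ℂ} (hs : 0 < s.re) {θ : ℝ} (h0 : 0 ≤ θ) (h1 : θ < Real.pi / 2) :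
    ‖Complex.Gamma s‖ ≤
      Real.exp (-(θ * |s.im|)) * ((Real.cos θ) ^ (-s.re) * Real.Gamma s.re) := by
  have key : ∀ φ : ℝ, |φ| = θ → ‖Complex.Gamma s‖ ≤
      Real.exp (-(φ * s.im)) * ((Real.cos θ) ^ (-s.re) * Real.Gamma s.re) := by
    intro φ hφ
    have hφ1 : -(Real.pi / 2) < φ ∧ φ < Real.pi / 2 := abs_lt.mp (hφ ▸ h1)
    have hcos : Real.cos φ = Real.cos θ := by rw [← hφ, Real.cos_abs]
    have hcp : 0 < Real.cos θ := hcos ▸ Real.cos_pos_of_mem_Ioo hφ1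
    set r : ℂ := Complex.exp (φ * Complex.I) with hr
    have hre : r.re = Real.cos θ := by rw [hr, Complex.exp_ofReal_mul_I_re, hcos]
    have hrn : ‖r‖ = 1 := Complex.norm_exp_ofReal_mul_I φ
    have harg : r.arg = φ := by
      rw [hr, Complex.arg_exp_mul_I]
      exact (toIocMod_eq_self _).mpr ⟨by linarith [Real.pi_pos], by linarith [Real.pi_pos]⟩
    have hr0 : r ≠ 0 := Complex.exp_ne_zero _
    have hL := laplace_cpow hs (r := r) (by rw [hre]; exact hcp)
    have hn : ‖r ^ (-s)‖ = Real.exp (φ * s.im) := by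
      rw [Complex.norm_cpow_of_ne_zero hr0, hrn, harg, Real.one_rpow, one_div, ← Real.exp_neg]
      simp
    have hb : ‖∫ t in Set.Ioi (0 : ℝ), (t : ℂ) ^ (s - 1) * Complex.exp (-(r * t))‖ ≤
        (Real.cos θ) ^ (-s.re) * Real.Gamma s.re := by
      refine (MeasureTheory.norm_integral_le_integral_norm _).trans (le_of_eq ?_)
      have h2 := Real.integral_rpow_mul_exp_neg_mul_Ioi hs hcp
      rw [one_div, Real.inv_rpow hcp.le, ← Real.rpow_neg hcp.le] at h2
      rw [← h2]
      refine MeasureTheory.setIntegral_congr_fun measurableSet_Ioi fun t ht => ?_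
      rw [norm_mul, Complex.norm_cpow_eq_rpow_re_of_pos ht, Complex.norm_exp]
      simp [hre]
    rw [hL, norm_mul, hn] at hb
    calc ‖Complex.Gamma s‖
        = Real.exp (-(φ * s.im)) * (Real.exp (φ * s.im) * ‖Complex.Gamma s‖) := by
          rw [← mul_assoc, ← Real.exp_add]; simp
      _ ≤ _ := by gcongr
  rcases le_total 0 s.im with h | h
  · rw [abs_of_nonneg h]; exact key θ (abs_of_nonneg h0)
  · rw [abs_of_nonpos h]
    have := key (-θ) (by rw [abs_neg, abs_of_nonneg h0])
    simpa using this

/-! ### `q`-series -/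

lemma qPoch_succ (a c : ℂ) (n : ℕ) : qPoch a c (n + 1) = qPoch a c n * (1 - a * c ^ n) := by
  simp [qPoch, Finset.prod_range_succ]

lemma qPoch_add (a c : ℂ) (n m : ℕ) :
    qPoch a c (n + m) = qPoch a c n * qPoch (a * c ^ n) c m := by
  simp only [qPoch, Finset.prod_range_add]
  congr 1
  refine Finset.prod_congr rfl fun j _ => ?_
  ring

lemma tendsto_qPoch (a : ℂ) {c : ℂ} (hc : ‖c‖ < 1) :
    Filter.Tendsto (qPoch a c) Filter.atTop (nhds (qPochInf a c)) := by
  have hs : Summable fun j : ℕ => ‖-(a * c ^ j)‖ := by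
    simp only [norm_neg, norm_mul, norm_pow]
    exact (summable_geometric_of_lt_one (norm_nonneg _) hc).mul_left _
  have h := (multipliable_one_add_of_summable hs).hasProd.tendsto_prod_nat
  simp only [← sub_eq_add_neg] at h
  exact h

lemma qPochInf_eq_mul (a : ℂ) {c : ℂ} (hc : ‖c‖ < 1) (n : ℕ) :
    qPochInf a c = qPoch a c n * qPochInf (a * c ^ n) c := by
  refine tendsto_nhds_unique (((Filter.tendsto_add_atTop_iff_nat n).mpr (tendsto_qPoch a hc))) ?_
  simp only [Nat.add_comm _ n, qPoch_add]
  exact (tendsto_qPoch (a * c ^ n) hc).const_mul _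

section qSeries
variable {q : ℝ}

lemma norm_ofReal_lt_one (hq0 : 0 < q) (hq1 : q < 1) : ‖(q : ℂ)‖ < 1 := by
  simpa [abs_of_pos hq0] using hq1

lemma one_sub_pow_pos (hq0 : 0 < q) (hq1 : q < 1) (n : ℕ) : 0 < 1 - q ^ (n + 1) := by
  linarith [pow_lt_one₀ hq0.le hq1 (Nat.add_one_ne_zero n)]

lemma one_sub_pow_ne (hq0 : 0 < q) (hq1 : q < 1) (n : ℕ) : (1 - (q : ℂ) ^ (n + 1)) ≠ 0 := by
  have := (one_sub_pow_pos hq0 hq1 n).ne'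
  exact_mod_cast this

lemma norm_one_sub_pow (hq0 : 0 < q) (hq1 : q < 1) (n : ℕ) :
    ‖1 - (q : ℂ) ^ (n + 1)‖ = 1 - q ^ (n + 1) := by
  rw [← Complex.ofReal_pow, ← Complex.ofReal_one, ← Complex.ofReal_sub, Complex.norm_real,
    Real.norm_of_nonneg (one_sub_pow_pos hq0 hq1 n).le]

lemma qPoch_self_succ (n : ℕ) :
    qPoch (q : ℂ) q (n + 1) = qPoch (q : ℂ) q n * (1 - (q : ℂ) ^ (n + 1)) := by
  rw [qPoch_succ, pow_succ']

lemma qPoch_self_ne_zero (hq0 : 0 < q) (hq1 : q < 1) (n : ℕ) : qPoch (q : ℂ) q n ≠ 0 := by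
  induction n with
  | zero => simp [qPoch]
  | succ n ih => rw [qPoch_self_succ]; exact mul_ne_zero ih (one_sub_pow_ne hq0 hq1 n)

/-- A power series evaluated along `q ^ N * y → 0` tends to its constant coefficient. -/
lemma tendsto_tsum_pow_mul (hq0 : 0 < q) (hq1 : q < 1) (c : ℕ → ℂ) (y : ℂ)
    (hs : Summable fun n => ‖c n * y ^ n‖) :
    Filter.Tendsto (fun N : ℕ => ∑' n, c n * ((q : ℂ) ^ N * y) ^ n) Filter.atTop (nhds (c 0)) := by
  have h := tendsto_tsum_of_dominated_convergence (𝓕 := Filter.atTop)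
    (f := fun (N : ℕ) n => c n * ((q : ℂ) ^ N * y) ^ n)
    (g := fun n => if n = 0 then c 0 else 0) hs ?_ ?_
  · rwa [tsum_ite_eq] at h
  · intro n
    rcases Nat.eq_zero_or_pos n with rfl | hn
    · simp
    · rw [if_neg hn.ne']
      have h1 : Filter.Tendsto (fun N : ℕ => (q : ℂ) ^ N) Filter.atTop (nhds 0) :=
        tendsto_pow_atTop_nhds_zero_of_norm_lt_one (norm_ofReal_lt_one hq0 hq1)
      simpa [hn.ne'] using ((h1.mul_const y).pow n).const_mul (c n)
  · refine Filter.Eventually.of_forall fun N n => ?_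
    rw [mul_pow, norm_mul, norm_mul, norm_mul]
    refine mul_le_mul_of_nonneg_left ?_ (norm_nonneg _)
    refine mul_le_of_le_one_left (norm_nonneg _) ?_
    rw [norm_pow, norm_pow]
    exact pow_le_one₀ (by positivity) (pow_le_one₀ (norm_nonneg _) (norm_ofReal_lt_one hq0 hq1).le)

lemma summable_qexp (hq0 : 0 < q) (hq1 : q < 1) {z : ℂ} (hz : ‖z‖ < 1) :
    Summable fun n : ℕ => ‖1 / qPoch (q : ℂ) q n * z ^ n‖ := by
  obtain ⟨r, hr, hr1⟩ := exists_between hz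
  have ht : Filter.Tendsto (fun n : ℕ => r * (1 - q ^ (n + 1))) Filter.atTop (nhds (r * (1 - 0))) :=
    (((tendsto_pow_atTop_nhds_zero_of_lt_one hq0.le hq1).comp
      (Filter.tendsto_add_atTop_nat 1)).const_sub 1).const_mul r
  rw [sub_zero, mul_one] at ht
  refine Summable.norm (summable_of_ratio_norm_eventually_le hr1 ?_)
  filter_upwards [ht.eventually (lt_mem_nhds hr)] with n hn
  have hp := one_sub_pow_pos hq0 hq1 n
  have : 1 / qPoch (q : ℂ) q (n + 1) * z ^ (n + 1) =
      (z / (1 - (q : ℂ) ^ (n + 1))) * (1 / qPoch (q : ℂ) q n * z ^ n) := by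
    rw [qPoch_self_succ]
    field_simp [qPoch_self_ne_zero hq0 hq1 n, one_sub_pow_ne hq0 hq1 n]
    ring
  rw [this, norm_mul]
  refine mul_le_mul_of_nonneg_right ?_ (norm_nonneg _)
  rw [norm_div, norm_one_sub_pow hq0 hq1, div_le_iff₀ hp]
  exact hn.le

/-- Euler's identity `(z;q)_∞ · ∑ zⁿ / (q;q)_n = 1`. -/
lemma qPochInf_mul_qexp (hq0 : 0 < q) (hq1 : q < 1) {z : ℂ} (hz : ‖z‖ < 1) :
    qPochInf z (q : ℂ) * ∑' n : ℕ, 1 / qPoch (q : ℂ) q n * z ^ n = 1 := by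
  set e : ℂ → ℂ := fun z => ∑' n : ℕ, 1 / qPoch (q : ℂ) q n * z ^ n with he
  have hqn := norm_ofReal_lt_one hq0 hq1
  have step : ∀ w : ℂ, ‖w‖ < 1 → (1 - w) * e w = e (q * w) := by
    intro w hw
    have hw' : ‖(q : ℂ) * w‖ < 1 := by
      rw [norm_mul]; exact mul_lt_one_of_nonneg_of_lt_one_left (norm_nonneg _) hqn hw.le
    have s1 := (summable_qexp hq0 hq1 hw).of_norm
    have s2 := (summable_qexp hq0 hq1 hw').of_norm
    have h : e w - e (q * w) = w * e w := by
      simp only [he]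
      rw [← s1.tsum_sub s2, (s1.sub s2).tsum_eq_zero_add, ← tsum_mul_left]
      simp only [pow_zero, sub_self, zero_add]
      refine tsum_congr fun n => ?_
      have h1 := qPoch_self_ne_zero hq0 hq1 n
      have h2 := one_sub_pow_ne hq0 hq1 n
      rw [qPoch_self_succ]
      field_simp
      ring
    linear_combination h
  have iter : ∀ N : ℕ, qPoch z q N * e z = e ((q : ℂ) ^ N * z) := by
    intro N
    induction N with
    | zero => simp [qPoch]
    | succ N ih =>
      have hw : ‖(q : ℂ) ^ N * z‖ < 1 := by
        rw [norm_mul, norm_pow]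
        exact mul_lt_one_of_nonneg_of_lt_one_right (pow_le_one₀ (norm_nonneg _) hqn.le)
          (norm_nonneg _) hz
      have := step _ hw
      rw [← ih] at this
      rw [qPoch_succ, pow_succ', mul_assoc (q : ℂ), ← this]
      ring
  have hl := (tendsto_qPoch z hqn).mul_const (e z)
  simp only [iter] at hl
  refine tendsto_nhds_unique hl ?_
  have h0 := tendsto_tsum_pow_mul hq0 hq1 _ z (summable_qexp hq0 hq1 hz)
  rwa [show (1 : ℂ) / qPoch (q : ℂ) q 0 = 1 by simp [qPoch]] at h0

lemma qPochInf_ne_zero (hq0 : 0 < q) (hq1 : q < 1) {z : ℂ} (hz : ‖z‖ < 1) :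
    qPochInf z (q : ℂ) ≠ 0 :=
  left_ne_zero_of_mul (by rw [qPochInf_mul_qexp hq0 hq1 hz]; exact one_ne_zero)

/-- The coefficient `(-1)ⁿ q^{n(n+1)/2} / (q;q)_n` of `G`. -/
noncomputable def gc (q : ℝ) (n : ℕ) : ℂ :=
  (-1) ^ n * (q : ℂ) ^ (n * (n + 1) / 2) / qPoch (q : ℂ) (q : ℂ) n

lemma gc_succ (hq0 : 0 < q) (hq1 : q < 1) (n : ℕ) :
    gc q (n + 1) * (1 - (q : ℂ) ^ (n + 1)) = -(q : ℂ) ^ (n + 1) * gc q n := by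
  have h1 := qPoch_self_ne_zero hq0 hq1 n
  have h2 := one_sub_pow_ne hq0 hq1 n
  have h3 : (n + 1) * (n + 1 + 1) / 2 = n * (n + 1) / 2 + (n + 1) := by
    rw [show (n + 1) * (n + 1 + 1) = n * (n + 1) + 2 * (n + 1) by ring,
      Nat.add_mul_div_left _ _ two_pos]
  rw [gc, gc, qPoch_self_succ, h3]
  field_simp
  ring

lemma norm_gc_succ (hq0 : 0 < q) (hq1 : q < 1) (n : ℕ) :
    ‖gc q (n + 1)‖ * (1 - q ^ (n + 1)) = q ^ (n + 1) * ‖gc q n‖ := by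
  have := congrArg norm (gc_succ hq0 hq1 n)
  rw [norm_mul, norm_mul, norm_one_sub_pow hq0 hq1, norm_neg, norm_pow, Complex.norm_real,
    Real.norm_of_nonneg hq0.le] at this
  exact this

lemma norm_gc_succ_le (hq0 : 0 < q) (hq1 : q < 1) (n : ℕ) :
    ‖gc q (n + 1)‖ ≤ q ^ (n + 1) / (1 - q) * ‖gc q n‖ := by
  have h := norm_gc_succ hq0 hq1 n
  have h1 : 0 < 1 - q := by linarith
  have h2 : 1 - q ≤ 1 - q ^ (n + 1) := by
    have := pow_le_of_le_one hq0.le hq1.le (Nat.add_one_ne_zero n)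
    linarith
  rw [div_mul_eq_mul_div, le_div_iff₀ h1, ← h]
  exact mul_le_mul_of_nonneg_left h2 (norm_nonneg _)

/-- The factor `q^{n(n+1)/2}` in `gc` beats any weight of factorial growth. -/
lemma summable_gc_mul (hq0 : 0 < q) (hq1 : q < 1) {w : ℕ → ℝ} (hw : ∀ n, 0 ≤ w n) {A B : ℝ}
    (hw1 : ∀ n, w (n + 1) ≤ (A * n + B) * w n) : Summable fun n => ‖gc q n‖ * w n := by
  have ht : Filter.Tendsto (fun n : ℕ => q / (1 - q) * (A * (n * q ^ n) + B * q ^ n)) Filter.atTop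
      (nhds (q / (1 - q) * (A * 0 + B * 0))) :=
    (((tendsto_self_mul_const_pow_of_lt_one hq0.le hq1).const_mul A).add
      ((tendsto_pow_atTop_nhds_zero_of_lt_one hq0.le hq1).const_mul B)).const_mul _
  simp only [mul_zero, add_zero] at ht
  refine summable_of_ratio_norm_eventually_le (r := 1 / 2) (by norm_num) ?_
  filter_upwards [ht.eventually (gt_mem_nhds (show (0 : ℝ) < 1 / 2 by norm_num))] with n hn
  have hp : 0 ≤ ‖gc q n‖ * w n := mul_nonneg (norm_nonneg _) (hw n)
  rw [Real.norm_of_nonneg (mul_nonneg (norm_nonneg _) (hw _)), Real.norm_of_nonneg hp]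
  have h1 : 0 < 1 - q := by linarith
  calc ‖gc q (n + 1)‖ * w (n + 1)
      ≤ (q ^ (n + 1) / (1 - q) * ‖gc q n‖) * ((A * n + B) * w n) :=
        mul_le_mul (norm_gc_succ_le hq0 hq1 n) (hw1 n) (hw _) (by positivity)
    _ = (q / (1 - q) * (A * (n * q ^ n) + B * q ^ n)) * (‖gc q n‖ * w n) := by
        rw [pow_succ]; ring
    _ ≤ 1 / 2 * (‖gc q n‖ * w n) := mul_le_mul_of_nonneg_right hn.le hp

lemma summable_gc_pow (hq0 : 0 < q) (hq1 : q < 1) (y : ℂ) :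
    Summable fun n => ‖gc q n * y ^ n‖ := by
  simp only [norm_mul, norm_pow]
  refine summable_gc_mul hq0 hq1 (A := 0) (B := ‖y‖) (fun n => by positivity) fun n => ?_
  rw [pow_succ]; exact le_of_eq (by ring)

/-- Euler's identity `∑ (-1)ⁿ q^{n(n+1)/2} yⁿ / (q;q)_n = (qy;q)_∞`. -/
lemma tsum_gc_pow (hq0 : 0 < q) (hq1 : q < 1) (y : ℂ) :
    ∑' n : ℕ, gc q n * y ^ n = qPochInf (q * y) (q : ℂ) := by
  set E : ℂ → ℂ := fun y => ∑' n : ℕ, gc q n * y ^ n with hE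
  have hqn := norm_ofReal_lt_one hq0 hq1
  have step : ∀ w : ℂ, E w = (1 - q * w) * E (q * w) := by
    intro w
    have s1 := (summable_gc_pow hq0 hq1 w).of_norm
    have s2 := (summable_gc_pow hq0 hq1 (q * w)).of_norm
    have h : E w - E (q * w) = -(q * w) * E (q * w) := by
      simp only [hE]
      rw [← s1.tsum_sub s2, (s1.sub s2).tsum_eq_zero_add, ← tsum_mul_left]
      simp only [pow_zero, sub_self, zero_add]
      refine tsum_congr fun n => ?_
      linear_combination w ^ (n + 1) * gc_succ hq0 hq1 n
    linear_combination h
  have iter : ∀ N : ℕ, E y = qPoch (q * y) q N * E ((q : ℂ) ^ N * y) := by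
    intro N
    induction N with
    | zero => simp [qPoch]
    | succ N ih =>
      rw [ih, step ((q : ℂ) ^ N * y), qPoch_succ, pow_succ', mul_assoc (q : ℂ) (_ ^ N) y]
      ring
  have hl := (tendsto_qPoch (q * y) hqn).mul
    (tendsto_tsum_pow_mul hq0 hq1 _ y (summable_gc_pow hq0 hq1 y))
  have hgc0 : gc q 0 = 1 := by simp [gc, qPoch]
  rw [hgc0, mul_one] at hl
  refine tendsto_nhds_unique (Filter.Tendsto.congr (fun N => (iter N)) tendsto_const_nhds) hl

/-- `(q^{j+1};q)_∞` vanishes for `j = -(m + 1) < 0`: the factor of index `m` is `1 - 1`. -/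
lemma qPochInf_neg (hq0 : 0 < q) (hq1 : q < 1) (m : ℕ) :
    qPochInf (q * (q : ℂ) ^ (-((m : ℤ) + 1))) (q : ℂ) = 0 := by
  have hq : (q : ℂ) ≠ 0 := Complex.ofReal_ne_zero.mpr hq0.ne'
  rw [qPochInf_eq_mul _ (norm_ofReal_lt_one hq0 hq1) (m + 1), qPoch_succ]
  have : (q : ℂ) * (q : ℂ) ^ (-((m : ℤ) + 1)) * (q : ℂ) ^ m = 1 := by
    rw [zpow_neg, zpow_add₀ hq, zpow_one, zpow_natCast]
    field_simp
  rw [this]; simp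

lemma qPochInf_nat (hq0 : 0 < q) (hq1 : q < 1) (j : ℕ) :
    qPochInf (q * (q : ℂ) ^ j) (q : ℂ) = qPochInf q q * (1 / qPoch (q : ℂ) q j) := by
  rw [qPochInf_eq_mul (q : ℂ) (norm_ofReal_lt_one hq0 hq1) j]
  field_simp [qPoch_self_ne_zero hq0 hq1 j]

end qSeries

/-! ### The double series -/

section DoubleSeries
open Complex Filter Topology
variable {q κ : ℝ}

/-- `μ` avoids the poles of every `Γ (μ + kκi)`, `k ∈ ℤ`. -/
def NoPole (κ : ℝ) (μ : ℂ) : Prop :=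
  ∀ (m : ℕ) (k : ℤ), μ ≠ -(m : ℂ) + (k : ℂ) * (κ : ℂ) * I

lemma NoPole.add_one {μ : ℂ} (h : NoPole κ μ) : NoPole κ (μ + 1) := by
  intro m k hk
  refine h (m + 1) k ?_
  push_cast
  linear_combination hk

lemma NoPole.shift_ne {μ : ℂ} (h : NoPole κ μ) (k : ℤ) (m : ℕ) :
    μ + (k : ℂ) * (κ : ℂ) * I ≠ -(m : ℂ) := by
  intro hk
  refine h m (-k) ?_
  push_cast
  linear_combination hk

lemma NoPole.shift_add_ne_zero {μ : ℂ} (h : NoPole κ μ) (k : ℤ) (n : ℕ) :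
    μ + (k : ℂ) * (κ : ℂ) * I + n ≠ 0 := fun h0 => h.shift_ne k n (by linear_combination h0)

lemma noPole_of_re_pos {μ : ℂ} (h : 0 < μ.re) : NoPole κ μ := by
  intro m k hk
  have := congrArg re hk
  simp at this
  have hm : (0 : ℝ) ≤ m := Nat.cast_nonneg m
  linarith

/-- Along `k ∈ ℤ`, the nonzero values of `|μ + kκi|` stay away from `0`; a zero value is harmless
because `0⁻¹ = 0`. -/
lemma exists_inv_norm_shift_le (hκ : 0 < κ) (μ : ℂ) :
    ∃ C : ℝ, 0 ≤ C ∧ ∀ k : ℤ, ‖μ + (k : ℂ) * (κ : ℂ) * I‖⁻¹ ≤ C := by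
  have h1 : Tendsto (fun k : ℤ => ‖((k : ℤ) : ℝ)‖) cofinite atTop :=
    tendsto_norm_cocompact_atTop.comp Int.tendsto_coe_cofinite
  have h2 : Tendsto (fun k : ℤ => κ * ‖((k : ℤ) : ℝ)‖ + -‖μ‖) cofinite atTop :=
    tendsto_atTop_add_const_right _ _ (h1.const_mul_atTop hκ)
  have h3 : Tendsto (fun k : ℤ => ‖μ + (k : ℂ) * (κ : ℂ) * I‖) cofinite atTop := by
    refine tendsto_atTop_mono (fun k => ?_) h2
    have h4 : ‖(k : ℂ) * (κ : ℂ) * I‖ = κ * ‖(k : ℝ)‖ := by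
      rw [norm_mul, norm_mul, norm_I, norm_real, Real.norm_of_nonneg hκ.le, ← ofReal_intCast,
        norm_real]
      ring
    have := norm_sub_le (μ + (k : ℂ) * (κ : ℂ) * I) μ
    rw [add_sub_cancel_left, h4] at this
    linarith
  obtain ⟨C, hC⟩ := (tendsto_inv_atTop_zero.comp h3).bddAbove_range_of_cofinite
  refine ⟨C, ?_, fun k => hC ⟨k, rfl⟩⟩
  exact (inv_nonneg.mpr (norm_nonneg _)).trans (hC ⟨0, rfl⟩)

/-- Exponential decay of `Γ (μ + kκi + n)` in `k`, with constants `w n` that remain summable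
against the coefficients of `G`. For `Re μ > 0` this is `norm_Gamma_le`; the functional equation
of `Γ` carries the bound from `μ + 1` to `μ`. -/
lemma exists_Gamma_bound (hq0 : 0 < q) (hq1 : q < 1) (hκ : 0 < κ) {θ : ℝ} (h0 : 0 ≤ θ)
    (h1 : θ < Real.pi / 2) {B : ℝ} (hB : 0 ≤ B) (N : ℕ) :
    ∀ μ : ℂ, 0 < μ.re + N → NoPole κ μ → ∃ w : ℕ → ℝ, (∀ n, 0 ≤ w n) ∧
      (Summable fun n => ‖gc q n‖ * (w n * B ^ n)) ∧
      ∀ (n : ℕ) (k : ℤ), ‖Gamma (μ + (k : ℂ) * (κ : ℂ) * I + n)‖ ≤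
        w n * Real.exp (-(θ * (κ * |(k : ℝ)|))) := by
  induction N with
  | zero =>
    intro μ hμ _
    simp only [Nat.cast_zero, add_zero] at hμ
    have hc : 0 < Real.cos θ := Real.cos_pos_of_mem_Ioo ⟨by linarith [Real.pi_pos], h1⟩
    refine ⟨fun n => Real.exp (θ * |μ.im|) *
      ((Real.cos θ) ^ (-(μ.re + n)) * Real.Gamma (μ.re + n)), fun n => ?_, ?_, fun n k => ?_⟩
    · have := Real.Gamma_pos_of_pos (show 0 < μ.re + n by positivity)
      positivity
    · refine summable_gc_mul hq0 hq1 (A := B / Real.cos θ) (B := μ.re * B / Real.cos θ)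
        (fun n => ?_) fun n => ?_
      · have := Real.Gamma_pos_of_pos (show 0 < μ.re + n by positivity)
        positivity
      · have hpos : μ.re + n ≠ 0 := by positivity
        push_cast
        rw [← add_assoc μ.re, Real.Gamma_add_one hpos, neg_add (μ.re + (n : ℝ)) 1,
          ← sub_eq_add_neg, Real.rpow_sub_one hc.ne', pow_succ]
        exact le_of_eq (by ring)
    · have hre : (μ + (k : ℂ) * (κ : ℂ) * I + n).re = μ.re + n := by simp
      have him : (μ + (k : ℂ) * (κ : ℂ) * I + n).im = μ.im + k * κ := by simp
      have hb := norm_Gamma_le (s := μ + (k : ℂ) * (κ : ℂ) * I + n) (by rw [hre]; positivity) h0 h1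
      rw [hre, him] at hb
      refine hb.trans ?_
      have hG := (Real.Gamma_pos_of_pos (show 0 < μ.re + n by positivity)).le
      have habs : κ * |(k : ℝ)| ≤ |μ.im + k * κ| + |μ.im| := by
        have := abs_sub (μ.im + k * κ) μ.im
        rw [add_sub_cancel_left, abs_mul, abs_of_pos hκ] at this
        linarith
      have hexp : Real.exp (-(θ * |μ.im + k * κ|)) ≤
          Real.exp (θ * |μ.im|) * Real.exp (-(θ * (κ * |(k : ℝ)|))) := by
        rw [← Real.exp_add]
        refine Real.exp_le_exp.mpr ?_
        nlinarith
      calc _ ≤ (Real.exp (θ * |μ.im|) * Real.exp (-(θ * (κ * |(k : ℝ)|)))) *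
            ((Real.cos θ) ^ (-(μ.re + n)) * Real.Gamma (μ.re + n)) := by gcongr
        _ = _ := by ring
  | succ N ih =>
    intro μ hμ hnp
    obtain ⟨w, hw0, hws, hwb⟩ := ih (μ + 1) (by push_cast at hμ; simp; linarith) hnp.add_one
    obtain ⟨C, hC0, hC⟩ := exists_inv_norm_shift_le hκ μ
    -- `n ≥ 1` is the case `n - 1` for `μ + 1`; only `n = 0` needs the functional equation
    refine ⟨fun n => Nat.casesOn n (C * w 0) w, ?_, ?_, ?_⟩
    · rintro (_ | n)
      · exact mul_nonneg hC0 (hw0 0)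
      · exact hw0 n
    · rw [← summable_nat_add_iff 1]
      have h1q : 0 < 1 - q := by linarith
      refine Summable.of_nonneg_of_le (fun n => ?_) (fun n => ?_) (hws.mul_left (B / (1 - q)))
      · exact mul_nonneg (norm_nonneg _) (mul_nonneg (hw0 n) (by positivity))
      · have hle : ‖gc q (n + 1)‖ ≤ 1 / (1 - q) * ‖gc q n‖ := by
          refine (norm_gc_succ_le hq0 hq1 n).trans ?_
          gcongr
          exact pow_le_one₀ hq0.le hq1.le
        have hp : 0 ≤ w n * B ^ (n + 1) := mul_nonneg (hw0 n) (by positivity)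
        calc ‖gc q (n + 1)‖ * (w n * B ^ (n + 1))
            ≤ (1 / (1 - q) * ‖gc q n‖) * (w n * B ^ (n + 1)) :=
              mul_le_mul_of_nonneg_right hle hp
          _ = _ := by rw [pow_succ]; ring
    · rintro (_ | n) k
      · have hne : μ + (k : ℂ) * (κ : ℂ) * I ≠ 0 := by simpa using hnp.shift_add_ne_zero k 0
        have hG := Gamma_add_one _ hne
        have hb := hwb 0 k
        rw [show μ + 1 + (k : ℂ) * (κ : ℂ) * I + ((0 : ℕ) : ℂ) = μ + (k : ℂ) * (κ : ℂ) * I + 1 by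
          push_cast; ring, hG, norm_mul] at hb
        simp only [Nat.cast_zero, add_zero]
        have hnn := norm_pos_iff.mpr hne
        calc ‖Gamma (μ + (k : ℂ) * (κ : ℂ) * I)‖
            = ‖μ + (k : ℂ) * (κ : ℂ) * I‖⁻¹ *
                (‖μ + (k : ℂ) * (κ : ℂ) * I‖ * ‖Gamma (μ + (k : ℂ) * (κ : ℂ) * I)‖) := by
              field_simp
          _ ≤ C * (w 0 * Real.exp (-(θ * (κ * |(k : ℝ)|)))) :=
              mul_le_mul (hC k) hb (by positivity) hC0
          _ = C * w 0 * Real.exp (-(θ * (κ * |(k : ℝ)|))) := by ring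
      · have hb := hwb n k
        rw [show μ + 1 + (k : ℂ) * (κ : ℂ) * I + (n : ℂ) =
          μ + (k : ℂ) * (κ : ℂ) * I + ((n + 1 : ℕ) : ℂ) by push_cast; ring] at hb
        exact hb

/-- The terms of the double series obtained by expanding `G` in the connection formula. -/
noncomputable def tt (q κ : ℝ) (μ : ℂ) (p : ℕ × ℤ) (z : ℂ) : ℂ :=
  gc q p.1 * Gamma (μ + (p.2 : ℂ) * (κ : ℂ) * I + p.1) *
    z ^ (-(μ + (p.2 : ℂ) * (κ : ℂ) * I + p.1))

lemma summable_exp_neg_abs {c : ℝ} (hc : 0 < c) :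
    Summable fun k : ℤ => Real.exp (-(c * |(k : ℝ)|)) := by
  have h : Summable fun n : ℕ => Real.exp (-(c * (n : ℝ))) := by
    have := Real.summable_exp_nat_mul_iff.mpr (neg_lt_zero.mpr hc)
    refine this.congr fun n => ?_
    congr 1; ring
  refine Summable.of_nat_of_neg ?_ ?_ <;> simpa using h

/-- The double series converges normally near each point of the right half-plane. -/
lemma exists_tt_bound (hq0 : 0 < q) (hq1 : q < 1) (hκ : 0 < κ) {μ : ℂ} (hμ : NoPole κ μ)
    {x : ℂ} (hx : 0 < x.re) :
    ∃ (u : ℕ × ℤ → ℝ) (U : Set ℂ), Summable u ∧ IsOpen U ∧ x ∈ U ∧ (∀ z ∈ U, 0 < z.re) ∧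
      ∀ (p : ℕ × ℤ) (z : ℂ), z ∈ U → ‖tt q κ μ p z‖ ≤ u p := by
  have hx0 : x ≠ 0 := by rintro rfl; simp at hx
  have hxn : ‖x‖ ≠ 0 := norm_ne_zero_iff.mpr hx0
  have harg : |x.arg| < Real.pi / 2 := abs_arg_lt_pi_div_two_iff.mpr (Or.inl hx)
  -- `|arg x| < φ < θ < π / 2`: `φ` bounds the argument near `x`, `θ` is the decay rate of `Γ`
  obtain ⟨φ, hφ, hφ1⟩ := exists_between harg
  obtain ⟨θ, hθ, hθ1⟩ := exists_between hφ1
  have hφ0 : 0 ≤ φ := (abs_nonneg _).trans hφ.le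
  set B : ℝ := ‖x‖⁻¹ + 1 with hB
  set M : ℝ := ‖x‖ ^ (-μ.re) + 1 with hM
  have hB0 : 0 ≤ B := by positivity
  have hM0 : 0 ≤ M := by positivity
  obtain ⟨N, hN⟩ := exists_nat_gt (-μ.re)
  obtain ⟨w, hw0, hws, hwb⟩ := exists_Gamma_bound hq0 hq1 hκ (hφ0.trans hθ.le) hθ1 hB0 N μ
    (by linarith) hμ
  have ev : ∀ᶠ z in 𝓝 x, 0 < z.re ∧ |z.arg| < φ ∧ ‖z‖⁻¹ < B ∧ ‖z‖ ^ (-μ.re) < M := by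
    have e1 : ∀ᶠ z : ℂ in 𝓝 x, 0 < z.re :=
      continuous_re.continuousAt.eventually (lt_mem_nhds hx)
    have e2 : ∀ᶠ z : ℂ in 𝓝 x, |z.arg| < φ :=
      (continuousAt_arg (Or.inl hx)).abs.eventually (gt_mem_nhds hφ)
    have e3 : ∀ᶠ z : ℂ in 𝓝 x, ‖z‖⁻¹ < B :=
      (continuous_norm.continuousAt.inv₀ hxn).eventually (gt_mem_nhds (lt_add_one _))
    have e4 : ∀ᶠ z : ℂ in 𝓝 x, ‖z‖ ^ (-μ.re) < M :=
      (continuous_norm.continuousAt.rpow_const (Or.inl hxn)).eventually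
        (gt_mem_nhds (lt_add_one _))
    filter_upwards [e1, e2, e3, e4] with z h1 h2 h3 h4 using ⟨h1, h2, h3, h4⟩
  obtain ⟨U, hU, hUo, hxU⟩ := eventually_nhds_iff.mp ev
  refine ⟨fun p => (‖gc q p.1‖ * (w p.1 * B ^ p.1)) *
    (M * Real.exp (φ * |μ.im|) * Real.exp (-(((θ - φ) * κ) * |(p.2 : ℝ)|))), U, ?_, hUo, hxU,
    fun z hz => (hU z hz).1, ?_⟩
  · refine hws.mul_of_nonneg ((summable_exp_neg_abs (mul_pos (sub_pos.mpr hθ) hκ)).mul_left _) ?_ ?_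
    · exact fun n => mul_nonneg (norm_nonneg _) (mul_nonneg (hw0 n) (by positivity))
    · exact fun n => by positivity
  · rintro ⟨n, k⟩ z hz
    obtain ⟨hz1, hz2, hz3, hz4⟩ := hU z hz
    have hz0 : z ≠ 0 := by rintro rfl; simp at hz1
    have hzn : 0 < ‖z‖ := norm_pos_iff.mpr hz0
    have hre : (-(μ + (k : ℂ) * (κ : ℂ) * I + n)).re = -μ.re + -(n : ℝ) := by simp; ring
    have him : (-(μ + (k : ℂ) * (κ : ℂ) * I + n)).im = -(μ.im + k * κ) := by simp
    have hpow : ‖z ^ (-(μ + (k : ℂ) * (κ : ℂ) * I + n))‖ ≤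
        M * B ^ n * (Real.exp (φ * |μ.im|) * Real.exp (φ * (κ * |(k : ℝ)|))) := by
      rw [norm_cpow_of_ne_zero hz0, hre, him, div_eq_mul_inv, ← Real.exp_neg, Real.rpow_add hzn,
        Real.rpow_neg hzn.le (n : ℝ), Real.rpow_natCast, ← inv_pow, ← Real.exp_add]
      have hle : -(z.arg * -(μ.im + k * κ)) ≤ φ * |μ.im| + φ * (κ * |(k : ℝ)|) := by
        rw [mul_neg, neg_neg, ← mul_add]
        refine (le_abs_self _).trans ?_
        rw [abs_mul]
        refine mul_le_mul hz2.le ?_ (abs_nonneg _) hφ0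
        refine (abs_add_le _ _).trans ?_
        rw [abs_mul, abs_of_pos hκ, mul_comm κ]
      gcongr
    simp only [tt, norm_mul]
    calc ‖gc q n‖ * ‖Gamma (μ + (k : ℂ) * (κ : ℂ) * I + n)‖ *
          ‖z ^ (-(μ + (k : ℂ) * (κ : ℂ) * I + n))‖
        ≤ ‖gc q n‖ * (w n * Real.exp (-(θ * (κ * |(k : ℝ)|)))) *
          (M * B ^ n * (Real.exp (φ * |μ.im|) * Real.exp (φ * (κ * |(k : ℝ)|)))) := by
          have := hw0 n
          gcongr
          exact hwb n k
      _ = _ := by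
          have : Real.exp (-(((θ - φ) * κ) * |(k : ℝ)|)) =
              Real.exp (-(θ * (κ * |(k : ℝ)|))) * Real.exp (φ * (κ * |(k : ℝ)|)) := by
            rw [← Real.exp_add]; congr 1; ring
          rw [this]; ring

lemma summable_norm_tt (hq0 : 0 < q) (hq1 : q < 1) (hκ : 0 < κ) {μ : ℂ} (hμ : NoPole κ μ)
    {x : ℂ} (hx : 0 < x.re) : Summable fun p => ‖tt q κ μ p x‖ := by
  obtain ⟨u, U, hu, -, hxU, -, hb⟩ := exists_tt_bound hq0 hq1 hκ hμ hx
  exact Summable.of_nonneg_of_le (fun _ => norm_nonneg _) (fun p => hb p x hxU) hu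

/-- The sum of the double series, as a function of `z`. -/
noncomputable def RR (q κ : ℝ) (μ : ℂ) (z : ℂ) : ℂ := ∑' p : ℕ × ℤ, tt q κ μ p z

lemma hasDerivAt_tt {μ : ℂ} (hμ : NoPole κ μ) (p : ℕ × ℤ) {z : ℂ} (hz : 0 < z.re) :
    HasDerivAt (tt q κ μ p) (-tt q κ (μ + 1) p z) z := by
  obtain ⟨n, k⟩ := p
  have h := ((hasDerivAt_id z).cpow_const (c := -(μ + (k : ℂ) * (κ : ℂ) * I + n))
    (Or.inl hz)).const_mul (gc q n * Gamma (μ + (k : ℂ) * (κ : ℂ) * I + n))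
  refine h.congr_deriv ?_
  have h1 := Gamma_add_one _ (hμ.shift_add_ne_zero k n)
  simp only [tt, id]
  rw [show μ + 1 + (k : ℂ) * (κ : ℂ) * I + n = μ + (k : ℂ) * (κ : ℂ) * I + n + 1 by ring, h1,
    show -(μ + (k : ℂ) * (κ : ℂ) * I + n + 1) = -(μ + (k : ℂ) * (κ : ℂ) * I + n) - 1 by ring]
  ring

lemma hasDerivAt_RR (hq0 : 0 < q) (hq1 : q < 1) (hκ : 0 < κ) {μ : ℂ} (hμ : NoPole κ μ)
    {x : ℂ} (hx : 0 < x.re) : HasDerivAt (RR q κ μ) (-RR q κ (μ + 1) x) x := by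
  obtain ⟨u, U, hu, hUo, hxU, hUre, hb⟩ := exists_tt_bound hq0 hq1 hκ hμ hx
  have hd : ∀ p, DifferentiableOn ℂ (tt q κ μ p) U := fun p z hz =>
    (hasDerivAt_tt hμ p (hUre z hz)).differentiableAt.differentiableWithinAt
  have h1 := hasSum_deriv_of_summable_norm hu hd hUo hb hxU
  have h2 := (differentiableOn_tsum_of_summable_norm hu hd hUo hb).differentiableAt
    (hUo.mem_nhds hxU)
  simp only [(hasDerivAt_tt hμ _ hx).deriv] at h1
  have h3 := h2.hasDerivAt
  rw [← h1.tsum_eq, tsum_neg] at h3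
  exact h3

lemma ofReal_mul_cpow (hq0 : 0 < q) {x : ℂ} (hx : x ≠ 0) (s : ℂ) :
    ((q : ℂ) * x) ^ s = qpow q s * x ^ s := by
  have hq : (q : ℂ) ≠ 0 := ofReal_ne_zero.mpr hq0.ne'
  rw [cpow_def_of_ne_zero (mul_ne_zero hq hx), cpow_def_of_ne_zero hx,
    log_ofReal_mul hq0 hx, qpow, ← Complex.exp_add]
  congr 1; ring

lemma qpow_add (s t : ℂ) : qpow q (s + t) = qpow q s * qpow q t := by
  rw [qpow, qpow, qpow, ← Complex.exp_add, add_mul]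

lemma qpow_ne_zero (s : ℂ) : qpow q s ≠ 0 := Complex.exp_ne_zero _

lemma qpow_natCast (hq0 : 0 < q) (n : ℕ) : qpow q n = (q : ℂ) ^ n := by
  rw [qpow, Complex.exp_nat_mul, ← ofReal_exp, Real.exp_log hq0]

lemma qpow_one (hq0 : 0 < q) : qpow q 1 = q := by simpa using qpow_natCast hq0 1

lemma qpow_kappa (hq0 : 0 < q) (hq1 : q < 1) (hκ : κ = -(2 * Real.pi) / Real.log q) (k : ℤ) :
    qpow q ((k : ℂ) * (κ : ℂ) * I) = 1 := by
  have hl : (Real.log q : ℂ) ≠ 0 := ofReal_ne_zero.mpr (Real.log_neg hq0 hq1).ne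
  rw [qpow, Complex.exp_eq_one_iff]
  refine ⟨-k, ?_⟩
  rw [hκ]; push_cast; field_simp

lemma qpow_mul_tt (hq0 : 0 < q) (hq1 : q < 1) (hκ : κ = -(2 * Real.pi) / Real.log q) (μ : ℂ)
    (n : ℕ) (k : ℤ) {x : ℂ} (hx : x ≠ 0) :
    (q : ℂ) ^ n * (qpow q μ * tt q κ μ (n, k) (q * x)) = tt q κ μ (n, k) x := by
  have h1 : (q : ℂ) ^ n * qpow q μ * qpow q (-(μ + (k : ℂ) * (κ : ℂ) * I + n)) = 1 := by
    rw [← qpow_natCast hq0 n, ← qpow_add, ← qpow_add,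
      show (n : ℂ) + μ + -(μ + (k : ℂ) * (κ : ℂ) * I + n) = ((-k : ℤ) : ℂ) * (κ : ℂ) * I by
        push_cast; ring, qpow_kappa hq0 hq1 hκ]
  simp only [tt]
  rw [ofReal_mul_cpow hq0 hx]
  linear_combination (gc q n * Gamma (μ + (k : ℂ) * (κ : ℂ) * I + n) *
    x ^ (-(μ + (k : ℂ) * (κ : ℂ) * I + n))) * h1

/-- The `q`-difference equation of `RR`; the `n`-th term of the left side is the `(n-1)`-st term on
the right, and the `n = 0` terms cancel. -/
lemma RR_sub (hq0 : 0 < q) (hq1 : q < 1) (hκ0 : 0 < κ) (hκ : κ = -(2 * Real.pi) / Real.log q)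
    {μ : ℂ} (hμ : NoPole κ μ) {x : ℂ} (hx : 0 < x.re) :
    RR q κ μ x - qpow q μ * RR q κ μ (q * x) = RR q κ (μ + 1) x := by
  have hx0 : x ≠ 0 := by rintro rfl; simp at hx
  have hq : (q : ℂ) ≠ 0 := ofReal_ne_zero.mpr hq0.ne'
  have hqx : 0 < ((q : ℂ) * x).re := by simpa using mul_pos hq0 hx
  have s1 := (summable_norm_tt hq0 hq1 hκ0 hμ hx).of_norm
  have s2 := (summable_norm_tt hq0 hq1 hκ0 hμ hqx).of_norm.mul_left (qpow q μ)
  have hinj : Function.Injective (fun p : ℕ × ℤ => ((p.1 + 1, p.2) : ℕ × ℤ)) := by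
    rintro ⟨a, b⟩ ⟨c, d⟩ h
    simpa using h
  rw [RR, RR, RR, ← tsum_mul_left, ← s1.tsum_sub s2, ← hinj.tsum_eq]
  · refine tsum_congr fun p => ?_
    obtain ⟨n, k⟩ := p
    have h1 := qpow_mul_tt hq0 hq1 hκ μ (n + 1) k hx0
    have h2 : tt q κ μ (n + 1, k) x * (1 - (q : ℂ) ^ (n + 1)) =
        -(q : ℂ) ^ (n + 1) * tt q κ (μ + 1) (n, k) x := by
      simp only [tt]
      rw [show μ + 1 + (k : ℂ) * (κ : ℂ) * I + (n : ℂ) =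
        μ + (k : ℂ) * (κ : ℂ) * I + ((n + 1 : ℕ) : ℂ) by push_cast; ring]
      linear_combination (Gamma (μ + (k : ℂ) * (κ : ℂ) * I + ((n + 1 : ℕ) : ℂ)) *
        x ^ (-(μ + (k : ℂ) * (κ : ℂ) * I + ((n + 1 : ℕ) : ℂ)))) * gc_succ hq0 hq1 n
    refine mul_left_cancel₀ (pow_ne_zero (n + 1) hq) ?_
    simp only
    linear_combination -h1 - h2
  · rintro ⟨n, k⟩ hp
    rcases n with _ | n
    · exfalso
      refine hp ?_
      have h1 := qpow_mul_tt hq0 hq1 hκ μ 0 k hx0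
      simp only [pow_zero, one_mul] at h1
      simp only [h1, sub_self]
    · exact ⟨(n, k), rfl⟩

end DoubleSeries

/-! ### Poisson summation -/

section Poisson
open Complex Filter Topology MeasureTheory
open scoped FourierTransform
variable {q κ : ℝ}

/-- The function whose values at the integers `j` are `q^{js} e^{-x q^j}`. -/
noncomputable def pt (q : ℝ) (s x : ℂ) (u : ℝ) : ℂ :=
  cexp (s * ((Real.log q * u : ℝ) : ℂ)) * cexp (-(x * cexp ((Real.log q * u : ℝ) : ℂ)))

lemma pt_intCast (hq0 : 0 < q) (s x : ℂ) (j : ℤ) :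
    pt q s x j = qpow q s ^ j * cexp (-(x * (q : ℂ) ^ j)) := by
  have h : cexp (Real.log q) = q := by rw [← ofReal_exp, Real.exp_log hq0]
  rw [pt, qpow, ← Complex.exp_int_mul, ← h, ← Complex.exp_int_mul]
  push_cast
  congr 2
  · ring
  · rw [mul_comm (j : ℂ)]

lemma norm_pt (s x : ℂ) (u : ℝ) :
    ‖pt q s x u‖ = Real.exp (s.re * (Real.log q * u)) *
      Real.exp (-(x.re * Real.exp (Real.log q * u))) := by
  rw [pt, norm_mul, Complex.norm_exp, Complex.norm_exp, ← ofReal_exp]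
  simp only [mul_re, neg_re, ofReal_re, ofReal_im, mul_zero, sub_zero]

lemma exists_norm_pt_le (hq0 : 0 < q) (hq1 : q < 1) {s x : ℂ} (hs : 0 < s.re) (hx : 0 < x.re) :
    ∃ C c : ℝ, 0 < c ∧ ∀ u : ℝ, ‖pt q s x u‖ ≤ C * Real.exp (-(c * |u|)) := by
  have hl := Real.log_neg hq0 hq1
  obtain ⟨n, hn⟩ := exists_nat_gt (2 * s.re)
  refine ⟨max 1 (n.factorial / x.re ^ n), s.re * -Real.log q, mul_pos hs (neg_pos.mpr hl),
    fun u => ?_⟩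
  rw [norm_pt]
  have habs : s.re * -Real.log q * |u| = s.re * |Real.log q * u| := by
    rw [abs_mul, abs_of_neg hl]; ring
  rw [habs]
  generalize Real.log q * u = v
  rcases le_total v 0 with hv | hv
  · rw [abs_of_nonpos hv]
    have h1 : Real.exp (-(x.re * Real.exp v)) ≤ 1 :=
      Real.exp_le_one_iff.mpr (by have := Real.exp_pos v; nlinarith)
    calc _ ≤ Real.exp (s.re * v) * 1 := by gcongr
      _ = 1 * Real.exp (-(s.re * -v)) := by rw [mul_one, one_mul]; congr 1; ring
      _ ≤ _ := by gcongr; exact le_max_left _ _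
  · rw [abs_of_nonneg hv]
    have h1 := Real.pow_div_factorial_le_exp (x.re * Real.exp v) (by positivity) n
    have h2 : Real.exp (2 * s.re * v) ≤ Real.exp v ^ n := by
      rw [← Real.exp_nat_mul]
      exact Real.exp_le_exp.mpr (mul_le_mul_of_nonneg_right hn.le hv)
    have hf : (0 : ℝ) < n.factorial := by exact_mod_cast n.factorial_pos
    have h3 : Real.exp v ^ n ≤ n.factorial / x.re ^ n * Real.exp (x.re * Real.exp v) := by
      rw [mul_pow, div_le_iff₀ hf] at h1
      rw [div_mul_eq_mul_div, le_div_iff₀ (by positivity)]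
      linarith
    calc Real.exp (s.re * v) * Real.exp (-(x.re * Real.exp v))
        = Real.exp (2 * s.re * v) * Real.exp (-(x.re * Real.exp v)) *
            Real.exp (-(s.re * v)) := by
          simp only [← Real.exp_add]; congr 1; ring
      _ ≤ (n.factorial / x.re ^ n * Real.exp (x.re * Real.exp v)) *
            Real.exp (-(x.re * Real.exp v)) * Real.exp (-(s.re * v)) := by
          gcongr; exact h2.trans h3
      _ = n.factorial / x.re ^ n * Real.exp (-(s.re * v)) := by
          rw [mul_assoc _ (Real.exp (x.re * Real.exp v)), ← Real.exp_add]; simp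
      _ ≤ _ := by gcongr; exact le_max_right _ _

lemma summable_norm_pt (hq0 : 0 < q) (hq1 : q < 1) {s x : ℂ} (hs : 0 < s.re) (hx : 0 < x.re) :
    Summable fun j : ℤ => ‖pt q s x j‖ := by
  obtain ⟨C, c, hc, h⟩ := exists_norm_pt_le hq0 hq1 hs hx
  exact Summable.of_nonneg_of_le (fun _ => norm_nonneg _) (fun j => h j)
    ((summable_exp_neg_abs hc).mul_left C)

/-- `laplace_cpow` after the substitution `t = e^v`. -/
lemma integral_exp_exp {s x : ℂ} (hs : 0 < s.re) (hx : 0 < x.re) :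
    ∫ v : ℝ, cexp (s * (v : ℂ)) * cexp (-(x * cexp (v : ℂ))) = x ^ (-s) * Gamma s := by
  rw [← laplace_cpow hs hx]
  have h := integral_image_eq_integral_abs_deriv_smul (s := Set.univ) (f := Real.exp)
    (f' := Real.exp) MeasurableSet.univ (fun v _ => (Real.hasDerivAt_exp v).hasDerivWithinAt)
    Real.exp_injective.injOn (fun t : ℝ => (t : ℂ) ^ (s - 1) * cexp (-(x * t)))
  rw [Set.image_univ, Real.range_exp, Measure.restrict_univ] at h
  rw [h]
  refine integral_congr_ae (Eventually.of_forall fun v => ?_)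
  simp only [Real.abs_exp, real_smul]
  rw [cpow_def_of_ne_zero (ofReal_ne_zero.mpr (Real.exp_pos v).ne'),
    ← ofReal_log (Real.exp_pos v).le,
    Real.log_exp, ofReal_exp, show s * (v : ℂ) = v + v * (s - 1) by ring, Complex.exp_add]
  ring

lemma kappa_pos (hq0 : 0 < q) (hq1 : q < 1) (hκ : κ = -(2 * Real.pi) / Real.log q) : 0 < κ := by
  rw [hκ]
  exact div_pos_of_neg_of_neg (by linarith [Real.pi_pos]) (Real.log_neg hq0 hq1)

lemma fourier_pt (hq0 : 0 < q) (hq1 : q < 1) (hκ : κ = -(2 * Real.pi) / Real.log q) {s x : ℂ}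
    (hs : 0 < s.re) (hx : 0 < x.re) (k : ℤ) :
    𝓕 (pt q s x) (k : ℝ) = (κ : ℂ) / (2 * Real.pi) *
      (Gamma (s + k * κ * I) * x ^ (-(s + k * κ * I))) := by
  have hl := Real.log_neg hq0 hq1
  rw [Real.fourier_real_eq_integral_exp_smul]
  have hs' : 0 < (s + k * κ * I).re := by simpa using hs
  have h := Measure.integral_comp_mul_left
    (fun v : ℝ => cexp ((s + k * κ * I) * (v : ℂ)) * cexp (-(x * cexp (v : ℂ)))) (Real.log q)
  rw [integral_exp_exp hs' hx] at h
  have habs : |(Real.log q)⁻¹| = κ / (2 * Real.pi) := by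
    rw [abs_of_neg (inv_neg''.mpr hl), hκ]
    field_simp [hl.ne, Real.pi_ne_zero]
  rw [habs, real_smul] at h
  push_cast at h
  rw [mul_comm (Gamma _), ← h]
  refine integral_congr_ae (Eventually.of_forall fun u => ?_)
  simp only [smul_eq_mul, pt]
  rw [← mul_assoc, ← Complex.exp_add, ← ofReal_mul]
  congr 2
  rw [hκ]
  have hl' : (Real.log q : ℂ) ≠ 0 := ofReal_ne_zero.mpr hl.ne
  push_cast
  field_simp
  ring

lemma tsum_pt (hq0 : 0 < q) (hq1 : q < 1) (hκ : κ = -(2 * Real.pi) / Real.log q) {s x : ℂ}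
    (hs : 0 < s.re) (hx : 0 < x.re) :
    ∑' j : ℤ, pt q s x j = (κ : ℂ) / (2 * Real.pi) *
      ∑' k : ℤ, Gamma (s + k * κ * I) * x ^ (-(s + k * κ * I)) := by
  have hκ0 := kappa_pos hq0 hq1 hκ
  obtain ⟨C, c, hc, hb⟩ := exists_norm_pt_le hq0 hq1 hs hx
  have hcont : Continuous (pt q s x) := by unfold pt; fun_prop
  have hO : pt q s x =O[cocompact ℝ] fun u => |u| ^ (-(2 : ℝ)) := by
    have h1 := ((isLittleO_exp_neg_mul_rpow_atTop hc (-2)).isBigO).comp_tendsto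
      (tendsto_norm_cocompact_atTop (E := ℝ))
    refine (Asymptotics.IsBigO.of_bound C (Eventually.of_forall fun u => ?_)).trans h1
    simpa [abs_of_pos (Real.exp_pos _)] using hb u
  have hsum : Summable fun k : ℤ => Gamma (s + k * κ * I) * x ^ (-(s + k * κ * I)) := by
    have h := (summable_norm_tt hq0 hq1 hκ0 (noPole_of_re_pos hs) hx).of_norm.comp_injective
      (i := fun k : ℤ => ((0, k) : ℕ × ℤ)) (fun a b h => by simpa using h)
    refine h.congr fun k => ?_
    simp [tt, gc, qPoch]
  have h := Real.tsum_eq_tsum_fourier_of_rpow_decay_of_summable hcont one_lt_two hO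
    (by simp only [fourier_pt hq0 hq1 hκ hs hx]; exact hsum.mul_left _) 0
  simp only [zero_add, fourier_pt hq0 hq1 hκ hs hx] at h
  rw [h, ← tsum_mul_left]
  simp

end Poisson

/-! ### The case `Re μ > 0` -/

section BaseCase
open Complex Filter Topology
variable {q κ : ℝ}

lemma norm_qpow_lt_one (hq0 : 0 < q) (hq1 : q < 1) {μ : ℂ} (hμ : 0 < μ.re) : ‖qpow q μ‖ < 1 := by
  have := Real.log_neg hq0 hq1
  rw [qpow, Complex.norm_exp, Real.exp_lt_one_iff]
  simpa using mul_neg_of_pos_of_neg hμ this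

lemma pt_add_nat (hq0 : 0 < q) (μ x : ℂ) (n : ℕ) (j : ℤ) :
    pt q (μ + n) x j = pt q μ x j * ((q : ℂ) ^ j) ^ n := by
  rw [pt_intCast hq0, pt_intCast hq0, qpow_add, qpow_natCast hq0, mul_zpow, ← zpow_natCast,
    ← zpow_natCast, ← zpow_mul, ← zpow_mul, mul_comm (n : ℤ)]
  ring

/-- Summing the norms of `pt` amounts to replacing the parameters by their real parts. -/
lemma ofReal_norm_pt (s x : ℂ) (u : ℝ) : ((‖pt q s x u‖ : ℝ) : ℂ) = pt q s.re x.re u := by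
  rw [norm_pt, pt]
  push_cast
  rfl

/-- Absolute convergence that permits interchanging the sums over `n` and `j`; the row sums are
evaluated by Poisson summation with real parameters. -/
lemma summable_gc_pt (hq0 : 0 < q) (hq1 : q < 1) (hκ : κ = -(2 * Real.pi) / Real.log q) {μ x : ℂ}
    (hμ : 0 < μ.re) (hx : 0 < x.re) :
    Summable fun p : ℕ × ℤ => gc q p.1 * pt q (μ + (p.1 : ℂ)) x p.2 := by
  have hκ0 := kappa_pos hq0 hq1 hκ
  have hσ : 0 < ((μ.re : ℝ) : ℂ).re := by simpa using hμ
  have hr : 0 < ((x.re : ℝ) : ℂ).re := by simpa using hx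
  have htt := summable_norm_tt hq0 hq1 hκ0 (noPole_of_re_pos hσ) hr
  have hre : ∀ n : ℕ, 0 < (μ + (n : ℂ)).re := fun n => by simp; positivity
  refine Summable.of_norm ((summable_prod_of_nonneg fun _ => norm_nonneg _).mpr ⟨fun n => ?_, ?_⟩)
  · simp only [norm_mul]
    exact (summable_norm_pt hq0 hq1 (hre n) hx).mul_left _
  · refine Summable.of_nonneg_of_le (fun n => tsum_nonneg fun _ => norm_nonneg _) (fun n => ?_)
      ((((summable_prod_of_nonneg fun _ => norm_nonneg _).mp htt).2).mul_left (κ / (2 * Real.pi)))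
    have hrow : ((∑' j : ℤ, ‖pt q (μ + (n : ℂ)) x j‖ : ℝ) : ℂ) = (κ : ℂ) / (2 * Real.pi) *
        ∑' k : ℤ, Gamma ((μ.re : ℂ) + k * κ * I + n) *
          (x.re : ℂ) ^ (-((μ.re : ℂ) + k * κ * I + n)) := by
      rw [ofReal_tsum]
      simp only [ofReal_norm_pt]
      rw [tsum_pt hq0 hq1 hκ (by simpa using hre n) hr]
      congr 1
      refine tsum_congr fun k => ?_
      have : (((μ + (n : ℂ)).re : ℝ) : ℂ) + k * κ * I = (μ.re : ℂ) + k * κ * I + n := by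
        simp; ring
      rw [this]
    simp only [norm_mul, tsum_mul_left]
    have hnn : 0 ≤ ∑' j : ℤ, ‖pt q (μ + (n : ℂ)) x j‖ := tsum_nonneg fun _ => norm_nonneg _
    rw [← Real.norm_of_nonneg hnn, ← norm_real, hrow, ← norm_mul, mul_left_comm, norm_mul,
      ← tsum_mul_left]
    have hc : ‖(κ : ℂ) / (2 * Real.pi)‖ = κ / (2 * Real.pi) := by
      rw [← ofReal_ofNat, ← ofReal_mul, ← ofReal_div, norm_real, Real.norm_of_nonneg]
      have := Real.pi_pos
      positivity
    rw [hc]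
    gcongr
    refine (norm_tsum_le_tsum_norm ?_).trans (le_of_eq ?_)
    · refine (htt.comp_injective (i := fun k : ℤ => ((n, k) : ℕ × ℤ))
        (fun a b h => by simpa using h)).congr fun k => ?_
      simp [tt, mul_assoc]
    · refine tsum_congr fun k => ?_
      simp [tt, mul_assoc]

/-- For `Re μ > 0` the double series collapses: Poisson summation in `k`, then Euler's identity in
`n`, whose value `(q^{j+1};q)_∞` vanishes for `j < 0`. -/
lemma RR_eq (hq0 : 0 < q) (hq1 : q < 1) (hκ : κ = -(2 * Real.pi) / Real.log q) {μ x : ℂ}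
    (hμ : 0 < μ.re) (hx : 0 < x.re) :
    (κ : ℂ) / (2 * Real.pi) * RR q κ μ x = qPochInf q q *
      ∑' j : ℕ, 1 / qPoch (q : ℂ) q j * qpow q μ ^ j * cexp (-(x * (q : ℂ) ^ j)) := by
  have hκ0 := kappa_pos hq0 hq1 hκ
  have hre : ∀ n : ℕ, 0 < (μ + (n : ℂ)).re := fun n => by simp; positivity
  have hs := summable_gc_pt hq0 hq1 hκ hμ hx
  have h1 : (κ : ℂ) / (2 * Real.pi) * RR q κ μ x =
      ∑' (n : ℕ) (j : ℤ), gc q n * pt q (μ + (n : ℂ)) x j := by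
    rw [RR, (summable_norm_tt hq0 hq1 hκ0 (noPole_of_re_pos hμ) hx).of_norm.tsum_prod,
      ← tsum_mul_left]
    refine tsum_congr fun n => ?_
    rw [tsum_mul_left (a := gc q n), tsum_pt hq0 hq1 hκ (hre n) hx, mul_left_comm,
      ← tsum_mul_left (a := gc q n)]
    congr 1
    refine tsum_congr fun k => ?_
    rw [add_right_comm μ]
    simp [tt, mul_assoc]
  have h2 : ∀ j : ℤ, ∑' n : ℕ, gc q n * pt q (μ + (n : ℂ)) x j =
      pt q μ x j * qPochInf (q * (q : ℂ) ^ j) q := by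
    intro j
    rw [← tsum_gc_pow hq0 hq1, ← tsum_mul_left]
    refine tsum_congr fun n => ?_
    rw [pt_add_nat hq0]; ring
  have h3 := Summable.tsum_comm (f := fun (n : ℕ) (j : ℤ) => gc q n * pt q (μ + (n : ℂ)) x j) hs
  rw [h1, ← h3]
  simp only [h2]
  rw [← (Nat.cast_injective (R := ℤ)).tsum_eq (f := fun j : ℤ => pt q μ x j *
    qPochInf (q * (q : ℂ) ^ j) q), ← tsum_mul_left]
  · refine tsum_congr fun j => ?_
    rw [pt_intCast hq0, zpow_natCast, zpow_natCast, qPochInf_nat hq0 hq1]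
    ring
  · intro j hj
    rcases lt_or_ge j 0 with h | h
    · refine absurd ?_ hj
      obtain ⟨m, rfl⟩ := Int.eq_negSucc_of_lt_zero h
      simp only [Int.negSucc_eq]
      rw [qPochInf_neg hq0 hq1, mul_zero]
    · exact ⟨j.toNat, Int.toNat_of_nonneg h⟩

/-- For `Re μ > 0` the `q`-binomial theorem expands `(q^μ;q)_n` in powers of `q^n`, and `F` becomes
a series of exponentials. -/
lemma F_eq (hq0 : 0 < q) (hq1 : q < 1) {μ : ℂ} (hμ : 0 < μ.re) (x : ℂ) :
    F μ q x = qPochInf (qpow q μ) q *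
      ∑' j : ℕ, 1 / qPoch (q : ℂ) q j * qpow q μ ^ j * cexp (-(x * (q : ℂ) ^ j)) := by
  set a := qpow q μ with ha
  have ha1 : ‖a‖ < 1 := norm_qpow_lt_one hq0 hq1 hμ
  have hqn := norm_ofReal_lt_one hq0 hq1
  have h1 : ∀ n : ℕ, qPoch a q n =
      qPochInf a q * ∑' j : ℕ, 1 / qPoch (q : ℂ) q j * (a * q ^ n) ^ j := by
    intro n
    have hz : ‖a * (q : ℂ) ^ n‖ < 1 := by
      rw [norm_mul, norm_pow]
      exact (mul_le_of_le_one_right (norm_nonneg _)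
        (pow_le_one₀ (norm_nonneg _) hqn.le)).trans_lt ha1
    rw [qPochInf_eq_mul a hqn n, mul_assoc, qPochInf_mul_qexp hq0 hq1 hz, mul_one]
  have hexp : ∀ y : ℂ, Summable fun n : ℕ => ‖y ^ n / (n.factorial : ℂ)‖ := fun y =>
    NormedSpace.norm_expSeries_div_summable y
  have hs : Summable fun p : ℕ × ℕ => (1 / qPoch (q : ℂ) q p.2 * (a * q ^ p.1) ^ p.2) *
      ((-x) ^ p.1 / (p.1.factorial : ℂ)) := by
    refine Summable.of_norm_bounded ((hexp (-x)).mul_of_nonneg (summable_qexp hq0 hq1 ha1)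
      (fun _ => norm_nonneg _) (fun _ => norm_nonneg _)) ?_
    rintro ⟨n, j⟩
    rw [norm_mul, mul_comm]
    refine mul_le_mul_of_nonneg_left ?_ (norm_nonneg _)
    simp only [norm_mul, norm_pow]
    refine mul_le_mul_of_nonneg_left ?_ (norm_nonneg _)
    refine pow_le_pow_left₀ (by positivity) ?_ _
    exact mul_le_of_le_one_right (norm_nonneg _) (pow_le_one₀ (norm_nonneg _) hqn.le)
  have h2 : F μ q x = qPochInf a q * ∑' (n : ℕ) (j : ℕ),
      (1 / qPoch (q : ℂ) q j * (a * q ^ n) ^ j) * ((-x) ^ n / (n.factorial : ℂ)) := by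
    rw [F, ← tsum_mul_left]
    refine tsum_congr fun n => ?_
    rw [tsum_mul_right, ← ha, h1 n]
    ring
  have h3 := Summable.tsum_comm (f := fun n j : ℕ =>
    (1 / qPoch (q : ℂ) q j * (a * q ^ n) ^ j) * ((-x) ^ n / (n.factorial : ℂ))) hs
  rw [h2, ← h3]
  congr 1
  refine tsum_congr fun j => ?_
  rw [show cexp (-(x * (q : ℂ) ^ j)) = ∑' n : ℕ, (-(x * (q : ℂ) ^ j)) ^ n / (n.factorial : ℂ) by
    rw [Complex.exp_eq_exp_ℂ, NormedSpace.exp_eq_tsum_div], ← tsum_mul_left]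
  refine tsum_congr fun n => ?_
  rw [neg_mul_eq_neg_mul, mul_pow, mul_pow, ← pow_mul, ← pow_mul, mul_comm n j]
  ring

/-- The coefficient in front of the series in the connection formula. -/
noncomputable def cc (q κ : ℝ) (μ : ℂ) : ℂ :=
  (κ : ℂ) * qPochInf (qpow q μ) (q : ℂ) / (2 * (Real.pi : ℂ) * qPochInf (q : ℂ) (q : ℂ))

lemma F_eq_RR_of_re_pos (hq0 : 0 < q) (hq1 : q < 1) (hκ : κ = -(2 * Real.pi) / Real.log q)
    {μ x : ℂ} (hμ : 0 < μ.re) (hx : 0 < x.re) : F μ q x = cc q κ μ * RR q κ μ x := by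
  have hne : qPochInf (q : ℂ) q ≠ 0 := qPochInf_ne_zero hq0 hq1 (norm_ofReal_lt_one hq0 hq1)
  have h := RR_eq hq0 hq1 hκ hμ hx
  have hpi : (Real.pi : ℂ) ≠ 0 := ofReal_ne_zero.mpr Real.pi_ne_zero
  rw [F_eq hq0 hq1 hμ, cc]
  set S := ∑' j : ℕ, 1 / qPoch (q : ℂ) q j * qpow q μ ^ j * cexp (-(x * (q : ℂ) ^ j))
  have h' : S = (κ : ℂ) / (2 * Real.pi) * RR q κ μ x / qPochInf (q : ℂ) q := by
    rw [h, mul_div_cancel_left₀ _ hne]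
  rw [h']
  field_simp

end BaseCase

/-! ### Continuation in `μ` -/

section Continuation
open Complex Filter Topology
variable {q κ : ℝ}

lemma qPoch_qpow_succ (hq0 : 0 < q) (μ : ℂ) (n : ℕ) :
    qPoch (qpow q μ) q (n + 1) = (1 - qpow q μ) * qPoch (qpow q (μ + 1)) q n := by
  rw [add_comm, qPoch_add, qpow_add, qpow_one hq0]
  simp [qPoch]

lemma exists_norm_qPoch_le (hq0 : 0 < q) (hq1 : q < 1) (a : ℂ) :
    ∃ C : ℝ, 0 ≤ C ∧ ∀ n, ‖qPoch a q n‖ ≤ C := by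
  obtain ⟨C, hC⟩ := (tendsto_qPoch a (norm_ofReal_lt_one hq0 hq1)).norm.bddAbove_range
  exact ⟨C, (norm_nonneg _).trans (hC ⟨0, rfl⟩), fun n => hC ⟨n, rfl⟩⟩

lemma exists_F_bound (hq0 : 0 < q) (hq1 : q < 1) (μ : ℂ) (R : ℝ) :
    ∃ u : ℕ → ℝ, Summable u ∧ ∀ (n : ℕ) (x : ℂ), ‖x‖ ≤ R →
      ‖qPoch (qpow q μ) q n / (n.factorial : ℂ) * (-x) ^ n‖ ≤ u n := by
  obtain ⟨C, hC0, hC⟩ := exists_norm_qPoch_le hq0 hq1 (qpow q μ)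
  refine ⟨fun n => C * (R ^ n / n.factorial), (Real.summable_pow_div_factorial R).mul_left C,
    fun n x hx => ?_⟩
  rw [norm_mul, norm_div, norm_natCast, norm_pow, norm_neg]
  calc _ ≤ C / n.factorial * R ^ n := by gcongr; exact hC n
    _ = _ := by ring

lemma summable_F (hq0 : 0 < q) (hq1 : q < 1) (μ x : ℂ) :
    Summable fun n : ℕ => qPoch (qpow q μ) q n / (n.factorial : ℂ) * (-x) ^ n := by
  obtain ⟨u, hu, hb⟩ := exists_F_bound hq0 hq1 μ ‖x‖
  exact Summable.of_norm_bounded hu fun n => hb n x le_rfl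

lemma hasDerivAt_F (hq0 : 0 < q) (hq1 : q < 1) (μ x : ℂ) :
    HasDerivAt (F μ q) (-((1 - qpow q μ) * F (μ + 1) q x)) x := by
  obtain ⟨u, hu, hb⟩ := exists_F_bound hq0 hq1 μ (‖x‖ + 1)
  have hxU : x ∈ Metric.ball (0 : ℂ) (‖x‖ + 1) := by simp
  have hUo : IsOpen (Metric.ball (0 : ℂ) (‖x‖ + 1)) := Metric.isOpen_ball
  have hd : ∀ n : ℕ, DifferentiableOn ℂ
      (fun x : ℂ => qPoch (qpow q μ) q n / (n.factorial : ℂ) * (-x) ^ n)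
      (Metric.ball (0 : ℂ) (‖x‖ + 1)) := fun n => by fun_prop
  have hb' : ∀ (n : ℕ) (z : ℂ), z ∈ Metric.ball (0 : ℂ) (‖x‖ + 1) →
      ‖qPoch (qpow q μ) q n / (n.factorial : ℂ) * (-z) ^ n‖ ≤ u n := fun n z hz =>
    hb n z (by simpa using (mem_ball_zero_iff.mp hz).le)
  have h1 := hasSum_deriv_of_summable_norm hu hd hUo hb' hxU
  have h3 := ((differentiableOn_tsum_of_summable_norm hu hd hUo hb').differentiableAt
    (hUo.mem_nhds hxU)).hasDerivAt
  have hderiv : ∀ n : ℕ,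
      deriv (fun x : ℂ => qPoch (qpow q μ) q n / (n.factorial : ℂ) * (-x) ^ n) x =
      qPoch (qpow q μ) q n / (n.factorial : ℂ) * (n * (-x) ^ (n - 1) * (-1)) := fun n =>
    (((hasDerivAt_id x).neg.pow n).const_mul _).deriv
  simp only [hderiv] at h1
  rw [← h1.tsum_eq, h1.summable.tsum_eq_zero_add] at h3
  refine h3.congr_deriv ?_
  simp only [Nat.cast_zero, zero_mul, mul_zero, zero_add, add_tsub_cancel_right]
  rw [F, ← tsum_mul_left, ← tsum_neg]
  refine tsum_congr fun n => ?_
  have hf : (n.factorial : ℂ) ≠ 0 := Nat.cast_ne_zero.mpr n.factorial_ne_zero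
  have hn : ((n : ℂ) + 1) ≠ 0 := Nat.cast_add_one_ne_zero n
  rw [qPoch_qpow_succ hq0, Nat.factorial_succ]
  push_cast
  field_simp

lemma F_sub (hq0 : 0 < q) (hq1 : q < 1) (μ x : ℂ) :
    F μ q x - qpow q μ * F μ q (q * x) = (1 - qpow q μ) * F (μ + 1) q x := by
  rw [F, F, F, ← tsum_mul_left, ← tsum_mul_left,
    ← (summable_F hq0 hq1 μ x).tsum_sub ((summable_F hq0 hq1 μ (q * x)).mul_left _)]
  refine tsum_congr fun n => ?_
  have h := qPoch_qpow_succ hq0 μ n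
  rw [qPoch_succ] at h
  rw [← mul_neg, mul_pow]
  linear_combination ((-x) ^ n / (n.factorial : ℂ)) * h

lemma cc_eq (hq0 : 0 < q) (hq1 : q < 1) (μ : ℂ) :
    cc q κ μ = (1 - qpow q μ) * cc q κ (μ + 1) := by
  rw [cc, cc, qPochInf_eq_mul (qpow q μ) (norm_ofReal_lt_one hq0 hq1) 1, pow_one, qpow_add,
    qpow_one hq0]
  simp only [qPoch, Finset.prod_range_one, pow_zero, mul_one]
  ring

/-- `q^μ = 1` only for `μ ∈ κ ℤ i`. -/
lemma qpow_ne_one (hq0 : 0 < q) (hq1 : q < 1) (hκ : κ = -(2 * Real.pi) / Real.log q) {μ : ℂ}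
    (hμ : NoPole κ μ) : qpow q μ ≠ 1 := by
  intro h
  obtain ⟨n, hn⟩ := Complex.exp_eq_one_iff.mp h
  refine hμ 0 (-n) ?_
  have hl : (Real.log q : ℂ) ≠ 0 := ofReal_ne_zero.mpr (Real.log_neg hq0 hq1).ne
  refine mul_right_cancel₀ hl (hn.trans ?_)
  rw [hκ]
  push_cast
  field_simp
  ring

/-- Continuation in `μ`: both sides have the same derivative by the case `μ + 1`, so they differ by
a constant `D`; the `q`-difference equation then gives `D = q^μ D`, and `q^μ ≠ 1`. -/
lemma F_eq_RR (hq0 : 0 < q) (hq1 : q < 1) (hκ : κ = -(2 * Real.pi) / Real.log q) (N : ℕ) :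
    ∀ μ : ℂ, 0 < μ.re + N → NoPole κ μ → ∀ x : ℂ, 0 < x.re →
      F μ q x = cc q κ μ * RR q κ μ x := by
  induction N with
  | zero => exact fun μ h _ x hx => F_eq_RR_of_re_pos hq0 hq1 hκ (by simpa using h) hx
  | succ N ih =>
    intro μ hre hμ x hx
    have hκ0 := kappa_pos hq0 hq1 hκ
    have IH := ih (μ + 1) (by push_cast at hre; simp; linarith) hμ.add_one
    have hqx : 0 < ((q : ℂ) * x).re := by simpa using mul_pos hq0 hx
    have hd : ∀ z : ℂ, 0 < z.re →
        HasDerivAt (fun z => F μ q z - cc q κ μ * RR q κ μ z) 0 z := fun z hz => by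
      refine ((hasDerivAt_F hq0 hq1 μ z).sub
        ((hasDerivAt_RR hq0 hq1 hκ0 hμ hz).const_mul (cc q κ μ))).congr_deriv ?_
      rw [IH z hz, cc_eq hq0 hq1 μ]
      ring
    have hopen : IsOpen {z : ℂ | 0 < z.re} := isOpen_lt continuous_const continuous_re
    have hconst := hopen.is_const_of_deriv_eq_zero (convex_halfSpace_re_gt 0).isPreconnected
      (fun z hz => (hd z hz).differentiableAt.differentiableWithinAt)
      (fun z hz => (hd z hz).deriv) (x := x) (y := q * x) hx hqx
    have h1 := F_sub hq0 hq1 μ x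
    have h2 := RR_sub hq0 hq1 hκ0 hκ hμ hx
    rw [IH x hx] at h1
    have h3 := cc_eq (κ := κ) hq0 hq1 μ
    have hne : 1 - qpow q μ ≠ 0 := sub_ne_zero.mpr (qpow_ne_one hq0 hq1 hκ hμ).symm
    refine sub_eq_zero.mp ((mul_eq_zero.mp ?_).resolve_left hne)
    linear_combination h1 - cc q κ μ * h2 - qpow q μ * hconst - RR q κ (μ + 1) x * h3

lemma Gamma_mul_poch {a : ℂ} (ha : ∀ m : ℕ, a ≠ -(m : ℂ)) (n : ℕ) :
    Gamma a * poch a n = Gamma (a + n) := by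
  induction n with
  | zero => simp [poch]
  | succ n ih =>
    have hne : a + n ≠ 0 := fun h => ha n (by linear_combination h)
    rw [poch, Finset.prod_range_succ, ← mul_assoc]
    change Gamma a * poch a n * (a + n) = _
    rw [ih, Nat.cast_succ, ← add_assoc, Gamma_add_one _ hne]
    ring

lemma tsum_tt (μ : ℂ) (hμ : NoPole κ μ) {x : ℂ} (hx : 0 < x.re) (k : ℤ) :
    ∑' n : ℕ, tt q κ μ (n, k) x = Gamma (μ + k * κ * I) * x ^ (-(μ + k * κ * I)) *
      G (μ + k * κ * I) q (1 / x) := by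
  have hx0 : x ≠ 0 := by rintro rfl; simp at hx
  rw [G, ← tsum_mul_left]
  refine tsum_congr fun n => ?_
  simp only [tt, gc]
  rw [← Gamma_mul_poch (hμ.shift_ne k) n, neg_add, cpow_add _ _ hx0, cpow_neg x n, cpow_natCast,
    neg_pow (1 / x), one_div, inv_pow]
  ring

end Continuation

/-- connection formula
`F(μ;q,x) = (κ (q^μ;q)_∞ / (2π (q;q)_∞)) Σ_{k∈ℤ} Γ(μ_k) x^{-μ_k} G(μ_k;q,1/x)` for `Re x > 0`,
where `μ_k = μ + kκi`, valid when `μ` avoids `ℤ_{≤0} ⊕ κℤi`. -/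
theorem stmt4 (q : ℝ) (hq0 : 0 < q) (hq1 : q < 1)
    (κ : ℝ) (hκ : κ = -(2 * Real.pi) / Real.log q) (μ : ℂ)
    (hμ : ∀ (m : ℕ) (k : ℤ), μ ≠ -(m : ℂ) + (k : ℂ) * (κ : ℂ) * Complex.I)
    (x : ℂ) (hx : 0 < x.re) :
    Summable (fun k : ℤ =>
      Complex.Gamma (μ + (k : ℂ) * (κ : ℂ) * Complex.I) *
        x ^ (-(μ + (k : ℂ) * (κ : ℂ) * Complex.I)) *
        G (μ + (k : ℂ) * (κ : ℂ) * Complex.I) q (1 / x)) ∧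
    F μ q x =
      (κ : ℂ) * qPochInf (qpow q μ) (q : ℂ) /
          (2 * (Real.pi : ℂ) * qPochInf (q : ℂ) (q : ℂ)) *
        ∑' k : ℤ,
          Complex.Gamma (μ + (k : ℂ) * (κ : ℂ) * Complex.I) *
            x ^ (-(μ + (k : ℂ) * (κ : ℂ) * Complex.I)) *
            G (μ + (k : ℂ) * (κ : ℂ) * Complex.I) q (1 / x) := by
  have hκ0 := kappa_pos hq0 hq1 hκ
  have hnp : NoPole κ μ := hμ
  obtain ⟨N, hN⟩ := exists_nat_gt (-μ.re)
  have hs : Summable fun p : ℕ × ℤ => tt q κ μ p x := (summable_norm_tt hq0 hq1 hκ0 hnp hx).of_norm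
  have hs' : Summable fun p : ℤ × ℕ => tt q κ μ (p.2, p.1) x := hs.prod_symm
  have hsum := hs'.prod
  have hRR : RR q κ μ x = ∑' (k : ℤ) (n : ℕ), tt q κ μ (n, k) x := by
    rw [← hs'.tsum_prod, RR, ← (Equiv.prodComm ℤ ℕ).tsum_eq]
    rfl
  have hF := F_eq_RR hq0 hq1 hκ N μ (by linarith) hnp x hx
  simp only [tsum_tt μ hnp hx] at hsum hRR
  exact ⟨hsum, by rw [hF, hRR, cc]⟩
end

section
/- Let μ ∈ ℂ and let x be a positive real number with x ∉ {q^n : n ∈ ℤ}. Set κ := −2π/log q, q* := exp(4π²/log q) (so 0 < q* < 1) and x* := exp(−κ·i·ln x). Then θ(q*, −x*) ≠ 0, θ(q, −x) ≠ 0, and θ(q, −q^μ·x)/θ(q, −x) = exp(−(μ(μ−1)/2)·log q) · exp(−μ·(ln x + πi)) · θ(q*, −e^{2πiμ}·x*)/θ(q*, −x*). -/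
/-- Jacobi theta function `θ(p,x) = Σ_{n∈ℤ} p^{n(n-1)/2} x^n`. -/
noncomputable def theta (p : ℝ) (x : ℂ) : ℂ :=
  ∑' n : ℤ, (p : ℂ) ^ (n * (n - 1) / 2) * x ^ n

/-! ### Comparison with `jacobiTheta₂` and the modular transformation -/

open Complex in
lemma theta_term_exp (L : ℝ) (w : ℂ) (n : ℤ) :
    ((Real.exp L : ℝ) : ℂ) ^ (n * (n - 1) / 2) * cexp w ^ n =
      jacobiTheta₂_term n ((w - L / 2) / (2 * Real.pi * I)) (L / (2 * Real.pi * I)) := by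
  have hpi : (Real.pi : ℂ) ≠ 0 := by exact_mod_cast Real.pi_ne_zero
  have h2 : 2 * (n * (n - 1) / 2) = n * (n - 1) :=
    Int.mul_ediv_cancel' (Int.even_mul_pred_self n).two_dvd
  have h3 : (2 : ℂ) * ((n * (n - 1) / 2 : ℤ) : ℂ) = n * (n - 1) := by exact_mod_cast h2
  rw [jacobiTheta₂_term, Complex.ofReal_exp, ← Complex.exp_int_mul, ← Complex.exp_int_mul,
    ← Complex.exp_add]
  congr 1
  have h4 : ((n * (n - 1) / 2 : ℤ) : ℂ) = n * (n - 1) / 2 := by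
    rw [← h3]; ring
  rw [h4]
  field_simp
  ring

/-- `theta` in terms of Mathlib's two-variable Jacobi theta function. -/
lemma theta_exp (L : ℝ) (w : ℂ) :
    theta (Real.exp L) (Complex.exp w) =
      jacobiTheta₂ ((w - L / 2) / (2 * Real.pi * Complex.I)) (L / (2 * Real.pi * Complex.I)) := by
  unfold theta jacobiTheta₂
  exact tsum_congr fun n => theta_term_exp L w n

lemma tau_im_pos {L : ℝ} (hL : L < 0) :
    0 < ((L : ℂ) / (2 * Real.pi * Complex.I)).im := by
  have h : (L : ℂ) / (2 * Real.pi * Complex.I) = ((-L / (2 * Real.pi) : ℝ) : ℂ) * Complex.I := by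
    have hpi : (Real.pi : ℂ) ≠ 0 := by exact_mod_cast Real.pi_ne_zero
    push_cast
    field_simp
    simp
  rw [h, Complex.im_ofReal_mul, Complex.I_im, mul_one]
  have := Real.pi_pos
  exact div_pos (by linarith) (by linarith)

lemma theta_summable {p : ℝ} (hp : 0 < p) (hp1 : p < 1) {y : ℂ} (hy : y ≠ 0) :
    Summable fun n : ℤ => (p : ℂ) ^ (n * (n - 1) / 2) * y ^ n := by
  have h := (summable_jacobiTheta₂_term_iff
    ((Complex.log y - (Real.log p : ℝ) / 2) / (2 * Real.pi * Complex.I)) _).mpr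
    (tau_im_pos (Real.log_neg hp hp1))
  refine h.congr fun n => ?_
  rw [← theta_term_exp, Real.exp_log hp, Complex.exp_log hy]

open Complex in
/-- Modular transformation of `theta`; the factor `c` depends on the nome only. -/
lemma theta_modular {L : ℝ} (hL : L < 0) :
    ∃ c : ℂ, c ≠ 0 ∧ ∀ w : ℂ, theta (Real.exp L) (cexp w) =
      c * cexp (-(w - L / 2) ^ 2 / (2 * L)) *
        theta (Real.exp (4 * Real.pi ^ 2 / L))
          (cexp (2 * Real.pi * I * w / L + 2 * Real.pi ^ 2 / L - Real.pi * I)) := by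
  have hpi : (Real.pi : ℂ) ≠ 0 := by exact_mod_cast Real.pi_ne_zero
  have hLc : (L : ℂ) ≠ 0 := by exact_mod_cast hL.ne
  have hI := Complex.I_ne_zero
  have hII := Complex.I_sq
  refine ⟨1 / (-I * (L / (2 * Real.pi * I))) ^ (1 / 2 : ℂ), ?_, fun w => ?_⟩
  · refine one_div_ne_zero ?_
    rw [Ne, Complex.cpow_eq_zero_iff, not_and_or]
    left
    exact mul_ne_zero (neg_ne_zero.mpr hI) (div_ne_zero hLc (by simp [hpi]))
  · rw [theta_exp, theta_exp, jacobiTheta₂_functional_equation]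
    congr 2
    · congr 1
      field_simp
    · push_cast
      field_simp
      ring_nf
    · push_cast
      field_simp
      rw [hII]; ring

/-! ### Quasi-periodicity -/

lemma theta_mul_nome {p : ℝ} (hp : 0 < p) {y : ℂ} (hy : y ≠ 0) :
    theta p (p * y) * y = theta p y := by
  have hpc : (p : ℂ) ≠ 0 := by exact_mod_cast hp.ne'
  unfold theta
  rw [← tsum_mul_right,
    ← (Equiv.addRight (1 : ℤ)).tsum_eq (fun n : ℤ => (p : ℂ) ^ (n * (n - 1) / 2) * y ^ n)]
  refine tsum_congr fun n => ?_
  have h : (Equiv.addRight (1 : ℤ)) n * ((Equiv.addRight (1 : ℤ)) n - 1) / 2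
      = n * (n - 1) / 2 + n := by
    simp only [Equiv.coe_addRight]
    have : (n + 1) * (n + 1 - 1) = n * (n - 1) + n * 2 := by ring
    rw [this, Int.add_mul_ediv_right _ _ (by norm_num)]
  rw [h, zpow_add₀ hpc, mul_zpow, Equiv.coe_addRight, zpow_add_one₀ hy]
  ring

/-- The zeros of `theta p` are invariant under multiplication by powers of `p`. -/
lemma theta_mul_zpow {p : ℝ} (hp : 0 < p) {y : ℂ} (hy : y ≠ 0) (k : ℤ) :
    theta p ((p : ℂ) ^ k * y) = 0 ↔ theta p y = 0 := by
  have hpc : (p : ℂ) ≠ 0 := by exact_mod_cast hp.ne'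
  have step : ∀ {z : ℂ}, z ≠ 0 → (theta p (p * z) = 0 ↔ theta p z = 0) := fun {z} hz => by
    rw [← theta_mul_nome hp hz, mul_eq_zero, or_iff_left hz]
  induction k with
  | zero => simp
  | succ k ih =>
    refine Iff.trans ?_ ih
    rw [← step (z := (p : ℂ) ^ (k : ℤ) * y) (mul_ne_zero (zpow_ne_zero _ hpc) hy), ← mul_assoc,
      ← zpow_one_add₀ hpc, add_comm 1 (k : ℤ)]
  | pred k ih =>
    refine Iff.trans ?_ ih
    rw [← step (mul_ne_zero (zpow_ne_zero _ hpc) hy), ← mul_assoc, ← zpow_one_add₀ hpc,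
      add_sub_cancel]

/-! ### Nonvanishing for small nomes -/

/-- The `n`-th term of the series for `theta (s ^ 2) (-y) / (1 - y)` that results from pairing the
exponents `n + 1` and `-n`. -/
noncomputable def pairTerm (s : ℝ) (y : ℂ) (n : ℕ) : ℂ :=
  (-1) ^ n * (s : ℂ) ^ (n * (n + 1)) * (y ^ n)⁻¹ * ∑ k ∈ Finset.range (2 * n + 1), y ^ k

/-- Each of the `2n + 1` powers of `y` in `pairTerm` contributes at most `s ^ (n ^ 2)`. -/
lemma norm_pairTerm_le {s : ℝ} (hs : 0 < s) (hs1 : s ≤ 1 / 10) {y : ℂ}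
    (hl : s ≤ ‖y‖) (hu : ‖y‖ * s ≤ 1) (n : ℕ) : ‖pairTerm s y n‖ ≤ (3 / 10 : ℝ) ^ n := by
  have hr : 0 < ‖y‖ := hs.trans_le hl
  have hk : ∀ k ∈ Finset.range (2 * n + 1), ‖y ^ k‖ ≤ ‖y‖ ^ n * (s ^ n)⁻¹ := by
    intro k hk
    rw [norm_pow, ← div_eq_mul_inv, le_div_iff₀ (pow_pos hs n)]
    rcases le_total k n with h | h
    · -- here `s ^ (n - k) ≤ ‖y‖ ^ (n - k)`, and `s ^ k ≤ 1`
      obtain ⟨m, rfl⟩ := Nat.exists_eq_add_of_le h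
      rw [pow_add, pow_add]
      gcongr
      calc s ^ k * s ^ m ≤ 1 * ‖y‖ ^ m := by
            gcongr
            exact pow_le_one₀ hs.le (by linarith)
        _ = ‖y‖ ^ m := one_mul _
    · -- here `k = n + m` with `m ≤ n`, and `(‖y‖ s) ^ m ≤ 1`
      obtain ⟨m, rfl⟩ := Nat.exists_eq_add_of_le h
      have hm : m ≤ n := by have := Finset.mem_range.mp hk; omega
      rw [pow_add, mul_assoc]
      refine mul_le_of_le_one_right (by positivity) ?_
      calc ‖y‖ ^ m * s ^ n ≤ ‖y‖ ^ m * s ^ m := by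
            gcongr ?_ * ?_
            exact pow_le_pow_of_le_one hs.le (by linarith) hm
        _ = (‖y‖ * s) ^ m := (mul_pow _ _ _).symm
        _ ≤ 1 := pow_le_one₀ (by positivity) hu
  have hsum : ‖∑ k ∈ Finset.range (2 * n + 1), y ^ k‖ ≤
      (2 * n + 1 : ℕ) * (‖y‖ ^ n * (s ^ n)⁻¹) := by
    refine (norm_sum_le _ _).trans ((Finset.sum_le_card_nsmul _ _ _ hk).trans_eq ?_)
    rw [Finset.card_range, nsmul_eq_mul]
  have h3 : ((2 * n + 1 : ℕ) : ℝ) ≤ 3 ^ n := by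
    have := one_add_mul_le_pow (a := (2 : ℝ)) (by norm_num) n
    push_cast
    norm_num at this
    linarith
  calc ‖pairTerm s y n‖ = s ^ (n * (n + 1)) * (‖y‖ ^ n)⁻¹ * ‖∑ k ∈ Finset.range (2 * n + 1), y ^ k‖ := by
        simp [pairTerm, abs_of_pos hs]
    _ ≤ s ^ (n * (n + 1)) * (‖y‖ ^ n)⁻¹ * (3 ^ n * (‖y‖ ^ n * (s ^ n)⁻¹)) := by
        gcongr
        exact hsum.trans (by gcongr)
    _ = 3 ^ n * s ^ (n * n) := by
        rw [mul_add, mul_one, pow_add]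
        field_simp
    _ ≤ 3 ^ n * (1 / 10) ^ n := by
        gcongr
        exact (pow_le_pow_of_le_one hs.le (by linarith) (Nat.le_mul_self n)).trans
          (by gcongr)
    _ = (3 / 10 : ℝ) ^ n := by rw [← mul_pow]; norm_num

lemma add_eq_pairTerm (s : ℝ) {y : ℂ} (hy : y ≠ 0) (n : ℕ) :
    ((s ^ 2 : ℝ) : ℂ) ^ (((n : ℤ) + 1) * ((n : ℤ) + 1 - 1) / 2) * (-y) ^ ((n : ℤ) + 1) +
      ((s ^ 2 : ℝ) : ℂ) ^ ((-((n : ℤ) + 1) + 1) * (-((n : ℤ) + 1) + 1 - 1) / 2) *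
        (-y) ^ (-((n : ℤ) + 1) + 1) = (1 - y) * pairTerm s y n := by
  have hpow : ∀ e : ℤ, ((s ^ 2 : ℝ) : ℂ) ^ e = (s : ℂ) ^ (2 * e) := fun e => by
    push_cast
    rw [zpow_mul]; norm_cast
  have e1 : 2 * (((n : ℤ) + 1) * ((n : ℤ) + 1 - 1) / 2) = ((n * (n + 1) : ℕ) : ℤ) := by
    rw [Int.mul_ediv_cancel' (Int.even_mul_pred_self _).two_dvd]
    push_cast; ring
  have e2 : 2 * ((-((n : ℤ) + 1) + 1) * (-((n : ℤ) + 1) + 1 - 1) / 2)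
      = ((n * (n + 1) : ℕ) : ℤ) := by
    rw [Int.mul_ediv_cancel' (Int.even_mul_pred_self _).two_dvd]
    push_cast; ring
  have hg : (1 - y) * ∑ k ∈ Finset.range (2 * n + 1), y ^ k = 1 - y ^ (2 * n + 1) :=
    mul_neg_geom_sum y (2 * n + 1)
  have e3 : (-((n : ℤ) + 1) + 1) = -(n : ℤ) := by ring
  have hR : (1 - y) * pairTerm s y n = (-1) ^ n * (s : ℂ) ^ (n * (n + 1)) * (y ^ n)⁻¹ *
      (1 - y ^ (2 * n + 1)) := by
    rw [← hg, pairTerm]; ring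
  have hsq : ((-1 : ℂ) ^ n)⁻¹ = (-1) ^ n := by
    rw [← inv_pow]; norm_num
  rw [hR]
  rw [hpow, hpow, e1, e2, e3, zpow_natCast, zpow_neg, zpow_natCast, zpow_add_one₀ (by simpa),
    zpow_natCast, neg_pow y n, mul_inv, hsq]
  field_simp
  ring

lemma theta_neg_eq_tsum_pairTerm {s : ℝ} (hs : 0 < s) (hs1 : s < 1) {y : ℂ} (hy : y ≠ 0) :
    theta (s ^ 2) (-y) = (1 - y) * ∑' n, pairTerm s y n := by
  have has := theta_summable (pow_pos hs 2) (pow_lt_one₀ hs.le hs1 two_ne_zero)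
    (neg_ne_zero.mpr hy)
  -- shift by one so that the standard pairing of `n` with `-(n + 1)` pairs `n + 1` with `-n`
  have has' := (Equiv.addRight (1 : ℤ)).summable_iff.mpr has
  have h2 := (HasSum.nat_add_neg_add_one has'.hasSum).tsum_eq
  unfold theta
  rw [← (Equiv.addRight (1 : ℤ)).tsum_eq, ← tsum_mul_left]
  refine Eq.trans h2.symm (tsum_congr fun n => ?_)
  rw [← add_eq_pairTerm s hy n]
  simp only [Function.comp_apply, Equiv.coe_addRight]

/-- For a small nome `p = s²`, `1` is the only zero of `y ↦ theta p (-y)` in the annulus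
`s ≤ ‖y‖ ≤ 1/s`. -/
lemma theta_neg_ne_zero_of_small {s : ℝ} (hs : 0 < s) (hs1 : s ≤ 1 / 10) {y : ℂ} (hy1 : y ≠ 1)
    (hl : s ≤ ‖y‖) (hu : ‖y‖ * s ≤ 1) : theta (s ^ 2) (-y) ≠ 0 := by
  have hy : y ≠ 0 := norm_pos_iff.mp (hs.trans_le hl)
  have hbound := norm_pairTerm_le hs hs1 hl hu
  have hgeo : HasSum (fun n : ℕ => (3 / 10 : ℝ) ^ n) (1 - 3 / 10)⁻¹ :=
    hasSum_geometric_of_lt_one (by norm_num) (by norm_num)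
  have hbs : Summable (pairTerm s y) := Summable.of_norm_bounded hgeo.summable hbound
  rw [theta_neg_eq_tsum_pairTerm hs (by linarith) hy]
  refine mul_ne_zero (sub_ne_zero.mpr hy1.symm) fun h0 => ?_
  rw [hbs.tsum_eq_zero_add] at h0
  have hb0 : pairTerm s y 0 = 1 := by simp [pairTerm]
  have htail : ‖∑' n, pairTerm s y (n + 1)‖ ≤ (1 - 3 / 10)⁻¹ * (3 / 10) := by
    refine tsum_of_norm_bounded (hgeo.mul_right (3 / 10)) fun n => ?_
    rw [← pow_succ]
    exact hbound (n + 1)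
  rw [hb0] at h0
  rw [eq_neg_of_add_eq_zero_right h0, norm_neg, norm_one] at htail
  norm_num at htail

lemma exp_half_le_tenth {L : ℝ} (hL : L ≤ -(2 * Real.pi)) : Real.exp (L / 2) ≤ 1 / 10 := by
  have h1 : Real.exp (L / 2) ≤ Real.exp (-3) :=
    Real.exp_le_exp.mpr (by linarith [Real.pi_gt_three])
  have h2 : (10 : ℝ) ≤ Real.exp 3 := by
    have h := Real.exp_one_gt_d9
    have : Real.exp 3 = Real.exp 1 ^ 3 := by rw [← Real.exp_nat_mul]; norm_num
    rw [this]
    calc (10 : ℝ) ≤ 2.7 ^ 3 := by norm_num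
      _ ≤ _ := by gcongr; linarith
  rw [Real.exp_neg] at h1
  refine h1.trans ?_
  rw [one_div]
  exact inv_anti₀ (by norm_num) h2

lemma exp_zpow_real (L : ℝ) (k : ℤ) : Real.exp L ^ k = Real.exp (k * L) := by
  rw [mul_comm, Real.exp_mul, Real.rpow_intCast]

lemma exp_eq_sq (L : ℝ) : Real.exp L = Real.exp (L / 2) ^ 2 := by
  rw [← Real.exp_nat_mul]; congr 1; push_cast; ring

/-- Nonvanishing on the positive axis off `q^ℤ`, for a small nome. -/
lemma theta_neg_ne_zero_real {L : ℝ} (hL : L ≤ -(2 * Real.pi)) {x : ℝ} (hx : 0 < x)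
    (hxq : ∀ n : ℤ, x ≠ Real.exp L ^ n) : theta (Real.exp L) (-(x : ℂ)) ≠ 0 := by
  have hL0 : L < 0 := by linarith [Real.pi_pos]
  -- `k` is the integer nearest to `log x / log q`, so that `x q^(-k)` lies in the annulus
  set k : ℤ := round (Real.log x / L) with hk
  have hround := abs_le.mp (abs_sub_round (Real.log x / L))
  rw [← hk] at hround
  set v : ℝ := Real.log x - k * L with hv
  have hvL : v = (Real.log x / L - k) * L := by
    rw [hv, sub_mul, div_mul_cancel₀ _ hL0.ne]
  have hv1 : L / 2 ≤ v := by rw [hvL]; nlinarith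
  have hv2 : v ≤ -L / 2 := by rw [hvL]; nlinarith
  have hxv : x = Real.exp L ^ k * Real.exp v := by
    rw [exp_zpow_real, ← Real.exp_add, hv, add_sub_cancel, Real.exp_log hx]
  have hv0 : Real.exp v ≠ 1 := fun h => hxq k (by rw [hxv, h, mul_one])
  have hsplit : -(x : ℂ) = ((Real.exp L : ℝ) : ℂ) ^ k * (-((Real.exp v : ℝ) : ℂ)) := by
    rw [hxv]; push_cast; ring
  have hvc : -((Real.exp v : ℝ) : ℂ) ≠ 0 :=
    neg_ne_zero.mpr (by exact_mod_cast (Real.exp_pos v).ne')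
  have hnorm : ‖((Real.exp v : ℝ) : ℂ)‖ = Real.exp v := by
    rw [Complex.norm_real, Real.norm_of_nonneg (Real.exp_pos v).le]
  rw [hsplit, Ne, theta_mul_zpow (Real.exp_pos L) hvc, exp_eq_sq L]
  refine theta_neg_ne_zero_of_small (Real.exp_pos _) (exp_half_le_tenth hL)
    (by exact_mod_cast hv0) ?_ ?_
  · rw [hnorm]; exact Real.exp_le_exp.mpr hv1
  · rw [hnorm, ← Real.exp_add, Real.exp_le_one_iff]; linarith

/-- Nonvanishing on the unit circle away from `1`, for a small nome. -/
lemma theta_neg_ne_zero_circle {L : ℝ} (hL : L ≤ -(2 * Real.pi)) {y : ℂ} (hy : ‖y‖ = 1)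
    (hy1 : y ≠ 1) : theta (Real.exp L) (-y) ≠ 0 := by
  have h := exp_half_le_tenth hL
  rw [exp_eq_sq L]
  exact theta_neg_ne_zero_of_small (Real.exp_pos _) h hy1 (by rw [hy]; linarith)
    (by rw [hy]; linarith)

/-! ### The ratio formula -/

/-- θ-modular relation for the ratio `θ(q,-q^μ x)/θ(q,-x)` at a positive real
`x ∉ q^ℤ`, with `q* = exp(4π²/log q)` and `x* = exp(-κ i ln x)`. -/
theorem stmt11 (q : ℝ) (hq0 : 0 < q) (hq1 : q < 1)
    (κ : ℝ) (hκ : κ = -(2 * Real.pi) / Real.log q) (μ : ℂ)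
    (x : ℝ) (hx : 0 < x) (hxq : ∀ n : ℤ, x ≠ q ^ n)
    (qs : ℝ) (hqs : qs = Real.exp (4 * Real.pi ^ 2 / Real.log q))
    (xs : ℂ) (hxs : xs = Complex.exp (-(κ : ℂ) * Complex.I * (Real.log x : ℂ))) :
    theta qs (-xs) ≠ 0 ∧ theta q (-(x : ℂ)) ≠ 0 ∧
    theta q (-(qpow q μ * (x : ℂ))) / theta q (-(x : ℂ)) =
      Complex.exp (-(μ * (μ - 1) / 2) * (Real.log q : ℂ)) *
        Complex.exp (-μ * ((Real.log x : ℂ) + (Real.pi : ℂ) * Complex.I)) *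
        (theta qs (-(Complex.exp (2 * (Real.pi : ℂ) * Complex.I * μ) * xs)) /
          theta qs (-xs)) := by
  obtain ⟨L, hLq⟩ : ∃ L, L = Real.log q := ⟨_, rfl⟩
  have hL : L < 0 := hLq ▸ Real.log_neg hq0 hq1
  have hq : q = Real.exp L := by rw [hLq, Real.exp_log hq0]
  rw [← hLq] at hκ hqs ⊢
  have hpi : (Real.pi : ℂ) ≠ 0 := by exact_mod_cast Real.pi_ne_zero
  have hLc : (L : ℂ) ≠ 0 := by exact_mod_cast hL.ne
  have hII := Complex.I_sq
  obtain ⟨c, hc, hmod⟩ := theta_modular hL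
  rw [← hq, ← hqs] at hmod
  have hxs' : xs = Complex.exp (2 * Real.pi * Complex.I * Real.log x / L) := by
    rw [hxs, hκ]
    congr 1
    push_cast
    field_simp
  have hxexp : (x : ℂ) = Complex.exp (Real.log x) := by
    rw [← Complex.ofReal_exp, Real.exp_log hx]
  have hnegexp : ∀ w : ℂ, -Complex.exp w = Complex.exp (w - Real.pi * Complex.I) := fun w => by
    rw [Complex.exp_sub, Complex.exp_pi_mul_I, div_neg, div_one]
  have hnegexp' : ∀ w : ℂ, -Complex.exp w = Complex.exp (w + Real.pi * Complex.I) := fun w => by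
    rw [Complex.exp_add, Complex.exp_pi_mul_I, mul_neg, mul_one]
  have key : ∀ ν : ℂ, theta q (-(qpow q ν * (x : ℂ))) =
      c * Complex.exp (-(Real.log x + Real.pi * Complex.I + ν * L - L / 2) ^ 2 / (2 * L)) *
        theta qs (-(Complex.exp (2 * (Real.pi : ℂ) * Complex.I * ν) * xs)) := by
    intro ν
    have h1 : -(qpow q ν * (x : ℂ)) =
        Complex.exp (Real.log x + Real.pi * Complex.I + ν * L) := by
      rw [qpow, ← hLq, hxexp, ← Complex.exp_add, hnegexp']
      congr 1; ring
    have h2 : -(Complex.exp (2 * (Real.pi : ℂ) * Complex.I * ν) * xs) =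
        Complex.exp (2 * Real.pi * Complex.I * (Real.log x + Real.pi * Complex.I + ν * L) / L +
          2 * Real.pi ^ 2 / L - Real.pi * Complex.I) := by
      rw [hxs', ← Complex.exp_add, hnegexp]
      congr 1
      field_simp
      ring_nf
      simp only [hII]
      ring
    rw [h1, h2, hmod]
  have key0 : theta q (-(x : ℂ)) =
      c * Complex.exp (-(Real.log x + Real.pi * Complex.I - L / 2) ^ 2 / (2 * L)) *
        theta qs (-xs) := by
    have := key 0
    simpa [qpow] using this
  have hiff : theta q (-(x : ℂ)) ≠ 0 ↔ theta qs (-xs) ≠ 0 := by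
    rw [key0]
    simp [hc]
  have hne : theta qs (-xs) ≠ 0 := by
    rcases le_total L (-(2 * Real.pi)) with h | h
    · rw [← hiff, hq]
      exact theta_neg_ne_zero_real h hx (hq ▸ hxq)
    · -- the dual nome is small in this case
      have hL' : 4 * Real.pi ^ 2 / L ≤ -(2 * Real.pi) := by
        rw [div_le_iff_of_neg hL]
        nlinarith [Real.pi_pos]
      rw [hqs]
      refine theta_neg_ne_zero_circle hL' ?_ fun h1 => ?_
      · have : 2 * Real.pi * Complex.I * Real.log x / L =
            ((2 * Real.pi * Real.log x / L : ℝ) : ℂ) * Complex.I := by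
          push_cast; ring
        rw [hxs', this, Complex.norm_exp_ofReal_mul_I]
      · -- `x* = 1` would put `log x` in `ℤ log q`
        rw [hxs', Complex.exp_eq_one_iff] at h1
        obtain ⟨n, hn⟩ := h1
        have hlog : (Real.log x : ℂ) = n * L := by
          have hI := Complex.I_ne_zero
          field_simp at hn
          linear_combination hn
        have hlog' : Real.log x = n * L := by exact_mod_cast hlog
        refine hxq n ?_
        rw [hq, exp_zpow_real, ← hlog', Real.exp_log hx]
  refine ⟨hne, hiff.mpr hne, ?_⟩
  have hG : Complex.exp (-(Real.log x + Real.pi * Complex.I + μ * L - L / 2) ^ 2 / (2 * L)) =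
      Complex.exp (-(μ * (μ - 1) / 2) * (L : ℂ)) *
        Complex.exp (-μ * ((Real.log x : ℂ) + (Real.pi : ℂ) * Complex.I)) *
        Complex.exp (-(Real.log x + Real.pi * Complex.I - L / 2) ^ 2 / (2 * L)) := by
    rw [← Complex.exp_add, ← Complex.exp_add]
    congr 1
    field_simp
    ring
  have hE := Complex.exp_ne_zero (-(Real.log x + Real.pi * Complex.I - L / 2) ^ 2 / (2 * L))
  rw [key μ, key0, hG]
  field_simp
end

section
/- Let κ := −2π/log q, and let u, μ ∈ ℂ with Re(u+μ) > 0 and μ ≠ n + kκi for all n, k ∈ ℤ. Then for every w ∈ ℂ with −κπ/2 < Re(w) < κπ/2, the three series below converge absolutely and Σ_{ℓ∈ℤ} Γ(u+μ+κiℓ)·e^{ℓw}/(1 − e^{2πi(μ+κiℓ)}) − e^{2πiμ}·Σ_{ℓ∈ℤ} Γ(u+μ+κiℓ)·e^{ℓ(w−2κπ)}/(1 − e^{2πi(μ+κiℓ)}) = Σ_{ℓ∈ℤ} Γ(u+μ+κiℓ)·e^{ℓw}. (Writing z = e^w, this is the relation Φ(u,μ;q,z) − Φ(u,μ;q,z·e^{−2κπ})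 = z^{−μi/κ}·Ψ(u+μ, κπ/2, z) between the function Φ(u,μ;q,z) = z^{−μi/κ}·Σ_{ℓ∈ℤ} Γ(u+μ+κiℓ)·z^ℓ/(1 − e^{2πi(μ+κiℓ)}) and Ψ.) -/
/-!
The identity holds term by term. With `A = e^{2πiμ}` and `D_l = 1 - e^{2πi(μ+κil)} = 1 - A e^{-2πκl}`,
the factor `e^{l(w-2κπ)}` equals `e^{lw} e^{-2κπl}`, so
`Γ e^{lw} / D_l - A Γ e^{l(w-2κπ)} / D_l = Γ e^{lw} (1 - A e^{-2κπl}) / D_l = Γ e^{lw}`;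
the hypothesis on `μ` says exactly that no `D_l` vanishes.

Convergence rests on exponential decay of `Γ` on vertical lines. Rotating the ray of integration in
Euler's integral gives `Γ(s) e^{-iθs} = ∫ t^{s-1} e^{-e^{iθ}t} dt` for `|θ| < π/2`
(`integral_cpow_mul_exp_neg_complex_mul`, by analytic continuation from a positive real scaling), and bounding the integral
by the integral of the absolute value gives `|Γ(s + iτ)| ≤ C e^{-θτ}` (`exists_norm_Gamma_vertical_le`). Choosing
`θ = ±θ₀` with `|Re w| < κθ₀ < κπ/2` makes both tails of `∑ Γ(u+μ+κil) e^{lw}` geometric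
(`summable_Gamma_mul_exp`). Since `D_l → 1` as `l → ∞` and `|D_l| → ∞` as `l → -∞`, dividing by
`D_l` costs at most a factor `2` outside a finite set (`eventually_half_le_norm`); the remaining
series is a linear combination of these two.
-/

lemma integrableOn_rpow_mul_exp_neg_mul (p b : ℝ) (hp : -1 < p) (hb : 0 < b) :
    MeasureTheory.IntegrableOn (fun t : ℝ => t ^ p * Real.exp (-(b * t))) (Set.Ioi 0) := by
  simpa [Real.rpow_one, neg_mul] using
    integrableOn_rpow_mul_exp_neg_mul_rpow (p := 1) hp one_pos hb

lemma aestronglyMeasurable_cpow_mul_exp (a r : ℂ) :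
    MeasureTheory.AEStronglyMeasurable
      (fun t : ℝ => (t : ℂ) ^ (a - 1) * Complex.exp (-(r * t)))
      (MeasureTheory.volume.restrict (Set.Ioi 0)) := by
  apply Measurable.aestronglyMeasurable
  fun_prop

lemma norm_cpow_mul_exp (a r : ℂ) {t : ℝ} (ht : 0 < t) :
    ‖(t : ℂ) ^ (a - 1) * Complex.exp (-(r * t))‖ =
      t ^ (a.re - 1) * Real.exp (-(r.re * t)) := by
  rw [norm_mul, Complex.norm_cpow_eq_rpow_re_of_pos ht, Complex.norm_exp]
  simp

/-- The Laplace transform of `t ^ (a - 1)` is holomorphic on the right half-plane. -/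
lemma differentiableAt_integral_cpow_mul_exp (a : ℂ) (ha : 0 < a.re) (r₀ : ℂ) (hr₀ : 0 < r₀.re) :
    DifferentiableAt ℂ
      (fun r : ℂ => ∫ t : ℝ in Set.Ioi 0, (t : ℂ) ^ (a - 1) * Complex.exp (-(r * t))) r₀ := by
  have hnhds : {r : ℂ | r₀.re / 2 < r.re} ∈ nhds r₀ :=
    (isOpen_lt continuous_const Complex.continuous_re).mem_nhds
      (show r₀.re / 2 < r₀.re by linarith)
  refine (hasDerivAt_integral_of_dominated_loc_of_deriv_le (𝕜 := ℂ) hnhds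
    (F' := fun r t => (t : ℂ) ^ (a - 1) * (Complex.exp (-(r * t)) * (-t)))
    (bound := fun t => t ^ a.re * Real.exp (-(r₀.re / 2 * t)))
    (.of_forall fun r => aestronglyMeasurable_cpow_mul_exp a r) ?_ ?_ ?_
    (integrableOn_rpow_mul_exp_neg_mul _ _ (by linarith) (by linarith)) ?_).2.differentiableAt
  · refine (integrableOn_rpow_mul_exp_neg_mul (a.re - 1) r₀.re (by linarith) hr₀).mono'
      (aestronglyMeasurable_cpow_mul_exp a r₀) ?_
    refine (MeasureTheory.ae_restrict_iff' measurableSet_Ioi).mpr (.of_forall fun t ht => ?_)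
    exact (norm_cpow_mul_exp a r₀ ht).le
  · apply Measurable.aestronglyMeasurable
    fun_prop
  · refine (MeasureTheory.ae_restrict_iff' measurableSet_Ioi).mpr (.of_forall fun t ht r hr => ?_)
    have ht : 0 < t := ht
    have hr : r₀.re / 2 < r.re := hr
    rw [← mul_assoc, norm_mul, norm_cpow_mul_exp a r ht, norm_neg, Complex.norm_real,
      Real.norm_of_nonneg ht.le, mul_right_comm, ← Real.rpow_add_one ht.ne', sub_add_cancel]
    gcongr
  · refine .of_forall fun t r _ => ?_
    have h : HasDerivAt (fun r : ℂ => -(r * (t : ℂ))) (-(t : ℂ)) r := by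
      simpa using ((hasDerivAt_id' r).mul_const (t : ℂ)).fun_neg
    exact h.cexp.const_mul _

/-- Euler's integral along a rotated ray: the identity for positive real `r` extends to the right
half-plane because both sides are holomorphic in `r`. -/
lemma integral_cpow_mul_exp_neg_complex_mul (a : ℂ) (ha : 0 < a.re) (r : ℂ) (hr : 0 < r.re) :
    ∫ t : ℝ in Set.Ioi 0, (t : ℂ) ^ (a - 1) * Complex.exp (-(r * t)) =
      (1 / r) ^ a * Complex.Gamma a := by
  have hopen : IsOpen {r : ℂ | 0 < r.re} := isOpen_lt continuous_const Complex.continuous_re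
  have hL : AnalyticOnNhd ℂ
      (fun r : ℂ => ∫ t : ℝ in Set.Ioi 0, (t : ℂ) ^ (a - 1) * Complex.exp (-(r * t)))
      {r : ℂ | 0 < r.re} :=
    DifferentiableOn.analyticOnNhd (fun r hr =>
      (differentiableAt_integral_cpow_mul_exp a ha r hr).differentiableWithinAt) hopen
  have hR : AnalyticOnNhd ℂ (fun r : ℂ => (1 / r) ^ a * Complex.Gamma a) {r : ℂ | 0 < r.re} := by
    refine DifferentiableOn.analyticOnNhd (fun r hr => ?_) hopen
    have hr : 0 < r.re := hr
    have hr0 : r ≠ 0 := by rintro rfl; simp at hr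
    have hslit : 1 / r ∈ Complex.slitPlane := by
      left
      rw [one_div, Complex.inv_re]
      exact div_pos hr (Complex.normSq_pos.mpr hr0)
    refine DifferentiableAt.differentiableWithinAt ?_
    exact (((differentiableAt_const 1).div differentiableAt_id hr0).cpow_const hslit).mul_const _
  refine hL.eqOn_of_preconnected_of_frequently_eq hR
    (convex_halfSpace_re_gt 0).isPreconnected (z₀ := ((1 : ℝ) : ℂ)) (by simp) ?_ hr
  have htend : Filter.Tendsto (fun x : ℝ => (x : ℂ)) (nhdsWithin 1 {1}ᶜ)
      (nhdsWithin ((1 : ℝ) : ℂ) {((1 : ℝ) : ℂ)}ᶜ) :=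
    Complex.continuous_ofReal.continuousAt.continuousWithinAt.tendsto_nhdsWithin
      fun x hx => by simpa using hx
  refine htend.frequently (Filter.Eventually.frequently ?_)
  filter_upwards [nhdsWithin_le_nhds (lt_mem_nhds one_pos)] with x hx
  exact Complex.integral_cpow_mul_exp_neg_mul_Ioi ha hx

/-- Exponential decay of `Γ` on a vertical line, at every rate `θ` below `π/2` in absolute value:
the modulus of the rotated Euler integral is at most the integral of the modulus, which does not
depend on `τ`. -/
lemma exists_norm_Gamma_vertical_le (s : ℂ) (hs : 0 < s.re) (θ : ℝ)
    (h1 : -(Real.pi / 2) < θ) (h2 : θ < Real.pi / 2) :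
    ∃ C : ℝ, ∀ τ : ℝ,
      ‖Complex.Gamma (s + (τ : ℂ) * Complex.I)‖ ≤ C * Real.exp (-(θ * τ)) := by
  set r : ℂ := Complex.exp (θ * Complex.I) with hr
  have hrre : 0 < r.re := by
    rw [hr, Complex.exp_ofReal_mul_I_re]
    exact Real.cos_pos_of_mem_Ioo ⟨h1, h2⟩
  refine ⟨(∫ t : ℝ in Set.Ioi 0, t ^ (s.re - 1) * Real.exp (-(r.re * t))) *
    Real.exp (-(θ * s.im)), fun τ => ?_⟩
  set a : ℂ := s + (τ : ℂ) * Complex.I with ha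
  have hare : a.re = s.re := by simp [ha]
  have haim : a.im = s.im + τ := by simp [ha]
  have key := integral_cpow_mul_exp_neg_complex_mul a (by rw [hare]; exact hs) r hrre
  have hinv : ‖(1 / r) ^ a‖ = Real.exp (θ * a.im) := by
    have h : 1 / r = Complex.exp (-(θ * Complex.I)) := by
      rw [hr, Complex.exp_neg, one_div]
    have hne : (1 / r) ≠ 0 := by rw [h]; exact Complex.exp_ne_zero _
    rw [Complex.cpow_def_of_ne_zero hne, h, Complex.log_exp]
    · rw [Complex.norm_exp]; congr 1; simp
    · simp; linarith [Real.pi_pos]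
    · simp; linarith [Real.pi_pos]
  have hle : Real.exp (θ * a.im) * ‖Complex.Gamma a‖ ≤
      ∫ t : ℝ in Set.Ioi 0, t ^ (s.re - 1) * Real.exp (-(r.re * t)) := by
    rw [← hinv, ← norm_mul, ← key]
    refine (MeasureTheory.norm_integral_le_integral_norm _).trans (le_of_eq ?_)
    refine MeasureTheory.setIntegral_congr_fun measurableSet_Ioi fun t ht => ?_
    have ht : 0 < t := ht
    simp only [norm_cpow_mul_exp a r ht, hare]
  calc ‖Complex.Gamma a‖
      = Real.exp (θ * a.im) * ‖Complex.Gamma a‖ * Real.exp (-(θ * a.im)) := by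
        rw [mul_right_comm, ← Real.exp_add, add_neg_cancel, Real.exp_zero, one_mul]
    _ ≤ (∫ t : ℝ in Set.Ioi 0, t ^ (s.re - 1) * Real.exp (-(r.re * t))) *
          Real.exp (-(θ * a.im)) := by gcongr
    _ = _ := by
        rw [haim, mul_assoc _ (Real.exp _) (Real.exp _), ← Real.exp_add]
        congr 2; ring

lemma summable_Gamma_mul_exp (κ : ℝ) (hκ : 0 < κ) (s : ℂ) (hs : 0 < s.re) (w : ℂ)
    (hw1 : -(κ * Real.pi / 2) < w.re) (hw2 : w.re < κ * Real.pi / 2) :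
    Summable (fun l : ℤ =>
      Complex.Gamma (s + (κ : ℂ) * Complex.I * (l : ℂ)) * Complex.exp ((l : ℂ) * w)) := by
  obtain ⟨θ, hθ1, hθ2⟩ : ∃ θ : ℝ, |w.re| / κ < θ ∧ θ < Real.pi / 2 := by
    apply exists_between
    rw [div_lt_iff₀ hκ, abs_lt]
    constructor <;> linarith
  rw [div_lt_iff₀ hκ, abs_lt] at hθ1
  have hθ0 : 0 < θ := by
    by_contra! h
    nlinarith [hθ1.1, hθ1.2]
  obtain ⟨C₁, hC₁⟩ := exists_norm_Gamma_vertical_le s hs θ (by linarith) hθ2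
  obtain ⟨C₂, hC₂⟩ := exists_norm_Gamma_vertical_le s hs (-θ) (by linarith) (by linarith)
  have geo : ∀ C b : ℝ, b < 0 → Summable fun n : ℕ => C * Real.exp (n * b) := fun C b hb =>
    (Real.summable_exp_nat_mul_iff.mpr hb).mul_left C
  have norm_eq : ∀ l : ℤ, ‖Complex.Gamma (s + (κ : ℂ) * Complex.I * (l : ℂ)) *
      Complex.exp ((l : ℂ) * w)‖ =
      ‖Complex.Gamma (s + ((κ * l : ℝ) : ℂ) * Complex.I)‖ * Real.exp (l * w.re) := by
    intro l
    rw [norm_mul, Complex.norm_exp]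
    congr 2
    · congr 2; push_cast; ring
    · simp
  refine Summable.of_nat_of_neg ?_ ?_
  · refine Summable.of_norm_bounded (geo C₁ (w.re - θ * κ) (by linarith)) fun n => ?_
    rw [norm_eq]
    refine (mul_le_mul_of_nonneg_right (hC₁ _) (Real.exp_pos _).le).trans (le_of_eq ?_)
    rw [mul_assoc, ← Real.exp_add]
    congr 2; push_cast; ring
  · refine Summable.of_norm_bounded (geo C₂ (-w.re - θ * κ) (by linarith)) fun n => ?_
    rw [norm_eq]
    refine (mul_le_mul_of_nonneg_right (hC₂ _) (Real.exp_pos _).le).trans (le_of_eq ?_)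
    rw [mul_assoc, ← Real.exp_add]
    congr 2; push_cast; ring

lemma eventually_half_le_norm (A : ℂ) (hA : A ≠ 0) (c : ℝ) (hc : 0 < c) :
    ∀ᶠ l : ℤ in Filter.cofinite, 1 / 2 ≤ ‖1 - A * (Real.exp (-(c * l)) : ℂ)‖ := by
  have hnorm : ∀ l : ℤ, ‖A * (Real.exp (-(c * l)) : ℂ)‖ = ‖A‖ * Real.exp (-(c * l)) := by
    intro l
    rw [norm_mul, Complex.norm_real, Real.norm_of_nonneg (Real.exp_pos _).le]
  have hA' : 0 < ‖A‖ := norm_pos_iff.mpr hA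
  rw [Int.cofinite_eq, Filter.eventually_sup]
  constructor
  · have h : Filter.Tendsto (fun l : ℤ => ‖A‖ * Real.exp (-(c * l))) Filter.atBot Filter.atTop := by
      refine Filter.Tendsto.const_mul_atTop hA' (Real.tendsto_exp_atTop.comp ?_)
      exact Filter.tendsto_neg_atBot_atTop.comp
        (Filter.Tendsto.const_mul_atBot hc (tendsto_intCast_atBot_iff.mpr Filter.tendsto_id))
    filter_upwards [h.eventually_ge_atTop 2] with l hl
    have := norm_sub_norm_le (A * (Real.exp (-(c * l)) : ℂ)) 1
    rw [norm_sub_rev, hnorm, norm_one] at this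
    linarith
  · have h : Filter.Tendsto (fun l : ℤ => ‖A‖ * Real.exp (-(c * l))) Filter.atTop
        (nhds (‖A‖ * 0)) := by
      refine Filter.Tendsto.const_mul _ (Real.tendsto_exp_atBot.comp ?_)
      exact Filter.tendsto_neg_atTop_atBot.comp
        (Filter.Tendsto.const_mul_atTop hc tendsto_intCast_atTop_atTop)
    rw [mul_zero] at h
    filter_upwards [h.eventually_le_const (show (0 : ℝ) < 1 / 2 by norm_num)] with l hl
    have := norm_sub_norm_le (1 : ℂ) (A * (Real.exp (-(c * l)) : ℂ))
    rw [hnorm, norm_one] at this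
    linarith


/-- the relation `Φ(u,μ;q,z) - Φ(u,μ;q,z e^{-2κπ}) = z^{-μi/κ} Ψ(u+μ,κπ/2,z)`
written with `z = e^w`, `-κπ/2 < Re w < κπ/2`. -/
theorem stmt16 (q : ℝ) (hq0 : 0 < q) (hq1 : q < 1)
    (κ : ℝ) (hκ : κ = -(2 * Real.pi) / Real.log q)
    (u μ : ℂ) (huμ : 0 < (u + μ).re)
    (hμ : ∀ n k : ℤ, μ ≠ (n : ℂ) + (k : ℂ) * (κ : ℂ) * Complex.I)
    (w : ℂ) (hw1 : -(κ * Real.pi / 2) < w.re) (hw2 : w.re < κ * Real.pi / 2) :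
    Summable (fun l : ℤ =>
      Complex.Gamma (u + μ + (κ : ℂ) * Complex.I * (l : ℂ)) * Complex.exp ((l : ℂ) * w) /
        (1 - Complex.exp (2 * (Real.pi : ℂ) * Complex.I *
          (μ + (κ : ℂ) * Complex.I * (l : ℂ))))) ∧
    Summable (fun l : ℤ =>
      Complex.Gamma (u + μ + (κ : ℂ) * Complex.I * (l : ℂ)) *
        Complex.exp ((l : ℂ) * (w - 2 * (κ : ℂ) * (Real.pi : ℂ))) /
        (1 - Complex.exp (2 * (Real.pi : ℂ) * Complex.I *
          (μ + (κ : ℂ) * Complex.I * (l : ℂ))))) ∧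
    Summable (fun l : ℤ =>
      Complex.Gamma (u + μ + (κ : ℂ) * Complex.I * (l : ℂ)) * Complex.exp ((l : ℂ) * w)) ∧
    (∑' l : ℤ,
        Complex.Gamma (u + μ + (κ : ℂ) * Complex.I * (l : ℂ)) * Complex.exp ((l : ℂ) * w) /
          (1 - Complex.exp (2 * (Real.pi : ℂ) * Complex.I *
            (μ + (κ : ℂ) * Complex.I * (l : ℂ))))) -
      Complex.exp (2 * (Real.pi : ℂ) * Complex.I * μ) *
        ∑' l : ℤ,
          Complex.Gamma (u + μ + (κ : ℂ) * Complex.I * (l : ℂ)) *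
            Complex.exp ((l : ℂ) * (w - 2 * (κ : ℂ) * (Real.pi : ℂ))) /
            (1 - Complex.exp (2 * (Real.pi : ℂ) * Complex.I *
              (μ + (κ : ℂ) * Complex.I * (l : ℂ)))) =
      ∑' l : ℤ,
        Complex.Gamma (u + μ + (κ : ℂ) * Complex.I * (l : ℂ)) * Complex.exp ((l : ℂ) * w) := by
  have hκ0 : 0 < κ := by
    rw [hκ]
    exact div_pos_of_neg_of_neg (by linarith [Real.pi_pos]) (Real.log_neg hq0 hq1)
  set A : ℂ := Complex.exp (2 * (Real.pi : ℂ) * Complex.I * μ) with hAdef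
  have hA : A ≠ 0 := Complex.exp_ne_zero _
  have hexp : ∀ l : ℤ, Complex.exp (2 * (Real.pi : ℂ) * Complex.I *
      (μ + (κ : ℂ) * Complex.I * (l : ℂ))) = A * (Real.exp (-((2 * Real.pi * κ) * l)) : ℂ) := by
    intro l
    rw [hAdef, Complex.ofReal_exp, ← Complex.exp_add]
    congr 1
    push_cast
    linear_combination (2 * (Real.pi : ℂ) * κ * l) * Complex.I_mul_I
  have hD : ∀ l : ℤ, 1 - Complex.exp (2 * (Real.pi : ℂ) * Complex.I *
      (μ + (κ : ℂ) * Complex.I * (l : ℂ))) ≠ 0 := by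
    intro l h
    obtain ⟨n, hn⟩ := Complex.exp_eq_one_iff.mp (sub_eq_zero.mp h).symm
    rw [mul_comm] at hn
    have := mul_right_cancel₀ Complex.two_pi_I_ne_zero hn
    apply hμ n (-l)
    push_cast
    linear_combination this
  have hS3 := summable_Gamma_mul_exp κ hκ0 (u + μ) huμ w hw1 hw2
  have hS1 : Summable (fun l : ℤ =>
      Complex.Gamma (u + μ + (κ : ℂ) * Complex.I * (l : ℂ)) * Complex.exp ((l : ℂ) * w) /
        (1 - Complex.exp (2 * (Real.pi : ℂ) * Complex.I *
          (μ + (κ : ℂ) * Complex.I * (l : ℂ))))) := by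
    refine Summable.of_norm_bounded_eventually (hS3.norm.mul_left 2) ?_
    filter_upwards [eventually_half_le_norm A hA (2 * Real.pi * κ) (by positivity)] with l hl
    rw [hexp, norm_div, div_le_iff₀ (by linarith)]
    nlinarith [norm_nonneg (Complex.Gamma (u + μ + (κ : ℂ) * Complex.I * (l : ℂ)) *
      Complex.exp ((l : ℂ) * w))]
  have hterm : ∀ l : ℤ,
      A * (Complex.Gamma (u + μ + (κ : ℂ) * Complex.I * (l : ℂ)) *
        Complex.exp ((l : ℂ) * (w - 2 * (κ : ℂ) * (Real.pi : ℂ))) /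
        (1 - Complex.exp (2 * (Real.pi : ℂ) * Complex.I *
          (μ + (κ : ℂ) * Complex.I * (l : ℂ))))) =
      Complex.Gamma (u + μ + (κ : ℂ) * Complex.I * (l : ℂ)) * Complex.exp ((l : ℂ) * w) /
        (1 - Complex.exp (2 * (Real.pi : ℂ) * Complex.I *
          (μ + (κ : ℂ) * Complex.I * (l : ℂ)))) -
      Complex.Gamma (u + μ + (κ : ℂ) * Complex.I * (l : ℂ)) * Complex.exp ((l : ℂ) * w) := by
    intro l
    have h0 := hD l
    have hs : Complex.exp ((l : ℂ) * (w - 2 * (κ : ℂ) * (Real.pi : ℂ))) =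
        Complex.exp ((l : ℂ) * w) * (Real.exp (-((2 * Real.pi * κ) * l)) : ℂ) := by
      rw [Complex.ofReal_exp, ← Complex.exp_add]
      congr 1
      push_cast
      ring
    rw [hexp] at h0 ⊢
    rw [hs]
    generalize (Real.exp (-((2 * Real.pi * κ) * l)) : ℂ) = E at h0 ⊢
    field_simp
    ring
  have hS2 : Summable (fun l : ℤ =>
      Complex.Gamma (u + μ + (κ : ℂ) * Complex.I * (l : ℂ)) *
        Complex.exp ((l : ℂ) * (w - 2 * (κ : ℂ) * (Real.pi : ℂ))) /
        (1 - Complex.exp (2 * (Real.pi : ℂ) * Complex.I *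
          (μ + (κ : ℂ) * Complex.I * (l : ℂ))))) := by
    rw [← summable_mul_left_iff hA]
    exact (hS1.sub hS3).congr fun l => (hterm l).symm
  refine ⟨hS1, hS2, hS3, ?_⟩
  rw [← tsum_mul_left, tsum_congr hterm, hS1.tsum_sub hS3]
  ring
end
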